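/- arXiv:1404.2675 — 12 statements merged into one kernel-verified Lean document; each statement's English description precedes it below -/
import Mathlib

section
/- Let ζ, β, τ1, τ2, γ ∈ ℝ, a ∈ [0,1], b = √(1−a²)·e^{iγ}, and ν1, ν2 ≥ 0 with ν1+ν2 = 1. Define the two-qubit unit vectors |Ψ1⟩ = cos(ζ/2)|00⟩ + sin(ζ/2)(cosβ e^{iτ1}|10⟩ + sinβ e^{iτ2}|11⟩) and |Ψ2⟩ = sin(ζ/2)|00⟩ − cos(ζ/2)(cosβ e^{iτ1}|10⟩ + sinβ e^{iτ2}|11⟩), and ρ = ν1|Ψ1⟩⟨Ψ1| + ν2|Ψ2⟩⟨Ψ2|. Let |ξ⟩ = a|0⟩ + b|1⟩ and |ξ'⟩ = b̄|0⟩ − a|1⟩, and for a unit vector η ∈ ℂ² let M(η) be the 2×2 matrix with entries M(η)_{jk} = (⟨j| ⊗ ⟨η|) ρ (|k⟩ ⊗ |η⟩), j,k ∈ {0,1}. Then det M(ξ) = a² ν1 ν2 |a cosβ + b̄ sinβ e^{i(τ2−τ1)}|² and det M(ξ') = (1−a²) ν1 ν2 |b cosβ − a sinβ e^{i(τ2−τ1)}|².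 -/
/-!
Write `Ψᵢ(η)` for Alice's vector `(I ⊗ ⟨η|) |Ψᵢ⟩`. Then
`M(η) = ν₁ |Ψ₁(η)⟩⟨Ψ₁(η)| + ν₂ |Ψ₂(η)⟩⟨Ψ₂(η)|`, and the determinant of such a rank-two combination
is `ν₁ ν₂ |Ψ₁(η) ∧ Ψ₂(η)|²`, where `x ∧ y = x₀ y₁ - x₁ y₀`. With
`w = η̄₀ cos β e^{iτ₁} + η̄₁ sin β e^{iτ₂}` one has `Ψ₁(η) = (cos(ζ/2) η̄₀, sin(ζ/2) w)` and
`Ψ₂(η) = (sin(ζ/2) η̄₀, -cos(ζ/2) w)`, so the wedge is `-η̄₀ w` by `cos² + sin² = 1`, and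
`det M(η) = ν₁ ν₂ |η₀|² |w|²` for every `η`. Both formulas follow by pulling the phase `e^{iτ₁}`
out of `w`; the second one also uses `|b|² = 1 - a²`.
-/

open Matrix Complex
open scoped ComplexOrder

noncomputable section

/-- The `j`-th standard basis vector of `ℂ²` (`|0⟩` and `|1⟩`). -/
def e2 (j : Fin 2) : Fin 2 → ℂ := fun i => if i = j then 1 else 0

/-- Tensor (Kronecker) product of two qubit vectors. -/
def tp2 (v w : Fin 2 → ℂ) : Fin 2 × Fin 2 → ℂ := fun p => v p.1 * w p.2

/-- Tensor (Kronecker) product of three qubit vectors. -/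
def tp3 (v w u : Fin 2 → ℂ) : Fin 2 × Fin 2 × Fin 2 → ℂ :=
  fun p => v p.1 * w p.2.1 * u p.2.2

/-- Kronecker product of two `2×2` matrices. -/
def tm2 (A B : Matrix (Fin 2) (Fin 2) ℂ) : Matrix (Fin 2 × Fin 2) (Fin 2 × Fin 2) ℂ :=
  Matrix.of fun p q => A p.1 q.1 * B p.2 q.2

/-- Kronecker product of three `2×2` matrices. -/
def tm3 (A B C : Matrix (Fin 2) (Fin 2) ℂ) :
    Matrix (Fin 2 × Fin 2 × Fin 2) (Fin 2 × Fin 2 × Fin 2) ℂ :=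
  Matrix.of fun p q => A p.1 q.1 * B p.2.1 q.2.1 * C p.2.2 q.2.2

/-- Outer product `|v⟩⟨v|`. -/
def outer {n : Type*} [Fintype n] (v : n → ℂ) : Matrix n n ℂ := Matrix.vecMulVec v (star v)

def sigmaX : Matrix (Fin 2) (Fin 2) ℂ := !![0, 1; 1, 0]
def sigmaY : Matrix (Fin 2) (Fin 2) ℂ := !![0, -Complex.I; Complex.I, 0]
def sigmaZ : Matrix (Fin 2) (Fin 2) ℂ := !![1, 0; 0, -1]

/-- The spin observable `n(θ,φ)·σ = sinθ cosφ σx + sinθ sinφ σy + cosθ σz`. -/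
def nsigma (θ φ : ℝ) : Matrix (Fin 2) (Fin 2) ℂ :=
  ((Real.sin θ * Real.cos φ : ℝ) : ℂ) • sigmaX +
    ((Real.sin θ * Real.sin φ : ℝ) : ℂ) • sigmaY + ((Real.cos θ : ℝ) : ℂ) • sigmaZ

/-- Kronecker tensor product of `N` `2×2` matrices, as a matrix indexed by `Fin N → Fin 2`. -/
def tpow {N : ℕ} (M : Fin N → Matrix (Fin 2) (Fin 2) ℂ) :
    Matrix (Fin N → Fin 2) (Fin N → Fin 2) ℂ :=
  Matrix.of fun i j => ∏ k, M k (i k) (j k)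

/-- Kronecker tensor product of `N` qubit vectors, indexed by `Fin N → Fin 2`. -/
def vpow {N : ℕ} (v : Fin N → (Fin 2 → ℂ)) : (Fin N → Fin 2) → ℂ :=
  fun i => ∏ k, v k (i k)

/-- `|Ψ1⟩ = cos(ζ/2)|00⟩ + sin(ζ/2)(cosβ e^{iτ1}|10⟩ + sinβ e^{iτ2}|11⟩)`. -/
def steerPsi1 (ζ β τ1 τ2 : ℝ) : Fin 2 × Fin 2 → ℂ := fun p =>
  (Real.cos (ζ / 2) : ℂ) * tp2 (e2 0) (e2 0) p +
    (Real.sin (ζ / 2) : ℂ) *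
      ((Real.cos β : ℂ) * Complex.exp (τ1 * Complex.I) * tp2 (e2 1) (e2 0) p +
        (Real.sin β : ℂ) * Complex.exp (τ2 * Complex.I) * tp2 (e2 1) (e2 1) p)

/-- `|Ψ2⟩ = sin(ζ/2)|00⟩ − cos(ζ/2)(cosβ e^{iτ1}|10⟩ + sinβ e^{iτ2}|11⟩)`. -/
def steerPsi2 (ζ β τ1 τ2 : ℝ) : Fin 2 × Fin 2 → ℂ := fun p =>
  (Real.sin (ζ / 2) : ℂ) * tp2 (e2 0) (e2 0) p -
    (Real.cos (ζ / 2) : ℂ) *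
      ((Real.cos β : ℂ) * Complex.exp (τ1 * Complex.I) * tp2 (e2 1) (e2 0) p +
        (Real.sin β : ℂ) * Complex.exp (τ2 * Complex.I) * tp2 (e2 1) (e2 1) p)

/-- `ρ = ν1|Ψ1⟩⟨Ψ1| + ν2|Ψ2⟩⟨Ψ2|`. -/
def steerRho (ζ β τ1 τ2 ν1 ν2 : ℝ) : Matrix (Fin 2 × Fin 2) (Fin 2 × Fin 2) ℂ :=
  (ν1 : ℂ) • outer (steerPsi1 ζ β τ1 τ2) + (ν2 : ℂ) • outer (steerPsi2 ζ β τ1 τ2)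

/-- Bob's (unnormalized) conditional state for Alice:
`M(η)_{jk} = (⟨j| ⊗ ⟨η|) ρ (|k⟩ ⊗ |η⟩)`. -/
def condMat (ρ : Matrix (Fin 2 × Fin 2) (Fin 2 × Fin 2) ℂ) (η : Fin 2 → ℂ) :
    Matrix (Fin 2) (Fin 2) ℂ :=
  Matrix.of fun j k => star (tp2 (e2 j) η) ⬝ᵥ ρ.mulVec (tp2 (e2 k) η)

/-- The weighted sum of two rank-one matrices `x x*`, `y y*` has determinant
`p q |x ∧ y|²`. -/
lemma det_add_outer (p q : ℂ) (x y : Fin 2 → ℂ) :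
    (p • outer x + q • outer y).det =
      p * q * (Complex.normSq (x 0 * y 1 - x 1 * y 0) : ℂ) := by
  simp only [Complex.normSq_eq_conj_mul_self, Matrix.det_fin_two, outer, Matrix.add_apply,
    Matrix.smul_apply, Matrix.vecMulVec_apply, Pi.star_apply, smul_eq_mul, map_sub, map_mul,
    RCLike.star_def]
  ring

/-- Alice's unnormalized vector `(I ⊗ ⟨η|) |Ψ⟩`. -/
def condVec (Ψ : Fin 2 × Fin 2 → ℂ) (η : Fin 2 → ℂ) : Fin 2 → ℂ :=
  fun j => ∑ k, star (η k) * Ψ (j, k)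

lemma condMat_mix (p q : ℂ) (Ψ Φ : Fin 2 × Fin 2 → ℂ) (η : Fin 2 → ℂ) :
    condMat (p • outer Ψ + q • outer Φ) η =
      p • outer (condVec Ψ η) + q • outer (condVec Φ η) := by
  ext j k
  fin_cases j <;> fin_cases k <;>
  · simp [condMat, condVec, outer, tp2, e2, Matrix.mulVec, dotProduct, Fintype.sum_prod_type,
      Matrix.vecMulVec_apply]
    ring

lemma det_condMat_steerRho (ζ β τ1 τ2 ν1 ν2 : ℝ) (η : Fin 2 → ℂ) :
    (condMat (steerRho ζ β τ1 τ2 ν1 ν2) η).det =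
      ν1 * ν2 * (Complex.normSq (η 0) : ℂ) *
        (Complex.normSq (star (η 0) * Real.cos β * Complex.exp (τ1 * Complex.I) +
          star (η 1) * Real.sin β * Complex.exp (τ2 * Complex.I)) : ℂ) := by
  have hwedge : condVec (steerPsi1 ζ β τ1 τ2) η 0 * condVec (steerPsi2 ζ β τ1 τ2) η 1 -
      condVec (steerPsi1 ζ β τ1 τ2) η 1 * condVec (steerPsi2 ζ β τ1 τ2) η 0 =
      -(star (η 0)) * (star (η 0) * Real.cos β * Complex.exp (τ1 * Complex.I) +
          star (η 1) * Real.sin β * Complex.exp (τ2 * Complex.I)) := by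
    have hcs : (Real.cos (ζ / 2) : ℂ) ^ 2 + (Real.sin (ζ / 2) : ℂ) ^ 2 = 1 := by
      exact_mod_cast Real.cos_sq_add_sin_sq (ζ / 2)
    simp only [condVec, steerPsi1, steerPsi2, tp2, e2, Fin.sum_univ_two, if_true, zero_ne_one,
      one_ne_zero, if_false]
    linear_combination (-(star (η 0)) *
      (star (η 0) * Real.cos β * Complex.exp (τ1 * Complex.I) +
        star (η 1) * Real.sin β * Complex.exp (τ2 * Complex.I))) * hcs
  rw [steerRho, condMat_mix, det_add_outer, hwedge, Complex.normSq_mul, Complex.normSq_neg,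
    RCLike.star_def, Complex.normSq_conj]
  push_cast
  ring

/-- A common phase `e^{iτ₁}` can be removed from a two-term amplitude. -/
lemma normSq_phase (x y : ℂ) (τ1 τ2 : ℝ) :
    Complex.normSq (x * Complex.exp (τ1 * Complex.I) + y * Complex.exp (τ2 * Complex.I)) =
      Complex.normSq (x + y * Complex.exp (((τ2 - τ1 : ℝ) : ℂ) * Complex.I)) := by
  have h : x * Complex.exp (τ1 * Complex.I) + y * Complex.exp (τ2 * Complex.I) =
      Complex.exp (τ1 * Complex.I) *
        (x + y * Complex.exp (((τ2 - τ1 : ℝ) : ℂ) * Complex.I)) := by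
    have h2 : Complex.exp (τ2 * Complex.I) =
        Complex.exp (τ1 * Complex.I) * Complex.exp (((τ2 - τ1 : ℝ) : ℂ) * Complex.I) := by
      rw [← Complex.exp_add]
      congr 1
      push_cast
      ring
    rw [h2]
    ring
  rw [h, Complex.normSq_mul, Complex.normSq_eq_norm_sq, Complex.norm_exp_ofReal_mul_I]
  ring

/-- The determinants of the conditional states of Alice's qubit after Bob
projects onto `|ξ⟩ = a|0⟩+b|1⟩` or `|ξ'⟩ = b̄|0⟩−a|1⟩` (with `b = √(1−a²)e^{iγ}`):
`det M(ξ) = a²ν1ν2 |a cosβ + b̄ sinβ e^{i(τ2−τ1)}|²` and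
`det M(ξ') = (1−a²)ν1ν2 |b cosβ − a sinβ e^{i(τ2−τ1)}|²`. -/
theorem conditional_state_determinants (ζ β τ1 τ2 γ : ℝ) (a : ℝ)
    (ha : a ∈ Set.Icc (0 : ℝ) 1) (ν1 ν2 : ℝ) (hν1 : 0 ≤ ν1) (hν2 : 0 ≤ ν2)
    (hsum : ν1 + ν2 = 1) (b : ℂ)
    (hb : b = (Real.sqrt (1 - a ^ 2) : ℂ) * Complex.exp (γ * Complex.I))
    (ξ ξ' : Fin 2 → ℂ)
    (hξ : ξ = fun i => (a : ℂ) * e2 0 i + b * e2 1 i)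
    (hξ' : ξ' = fun i => (starRingEnd ℂ) b * e2 0 i - (a : ℂ) * e2 1 i) :
    (condMat (steerRho ζ β τ1 τ2 ν1 ν2) ξ).det =
        ((a ^ 2 * ν1 * ν2 : ℝ) : ℂ) *
          (Complex.normSq ((a : ℂ) * (Real.cos β : ℂ) +
            (starRingEnd ℂ) b * (Real.sin β : ℂ) *
              Complex.exp (((τ2 - τ1 : ℝ) : ℂ) * Complex.I)) : ℂ) ∧
      (condMat (steerRho ζ β τ1 τ2 ν1 ν2) ξ').det =
        (((1 - a ^ 2) * ν1 * ν2 : ℝ) : ℂ) *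
          (Complex.normSq (b * (Real.cos β : ℂ) -
            (a : ℂ) * (Real.sin β : ℂ) *
              Complex.exp (((τ2 - τ1 : ℝ) : ℂ) * Complex.I)) : ℂ) := by
  have hbsq : Complex.normSq b = 1 - a ^ 2 := by
    have h : 0 ≤ 1 - a ^ 2 := by nlinarith [ha.1, ha.2]
    rw [hb, Complex.normSq_mul, Complex.normSq_ofReal, Real.mul_self_sqrt h,
      Complex.normSq_eq_norm_sq, Complex.norm_exp_ofReal_mul_I]
    ring
  have h0 : ξ 0 = a := by simp [hξ, e2]
  have h1 : ξ 1 = b := by simp [hξ, e2]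
  have h0' : ξ' 0 = (starRingEnd ℂ) b := by simp [hξ', e2]
  have h1' : ξ' 1 = -(a : ℂ) := by simp [hξ', e2]
  constructor
  · rw [det_condMat_steerRho, normSq_phase, h0, h1, Complex.normSq_ofReal, RCLike.star_def,
      Complex.conj_ofReal]
    push_cast
    ring
  · rw [det_condMat_steerRho, normSq_phase, h0', h1', Complex.normSq_conj, hbsq, RCLike.star_def,
      Complex.conj_conj, map_neg, Complex.conj_ofReal, neg_mul, neg_mul,
      ← sub_eq_add_neg]
    push_cast
    ring
end
end

section
/- Let ζ, τ ∈ ℝ, ν1, ν2 ≥ 0 with ν1+ν2 = 1, V = ν1−ν2, |Ψ1⟩ = cos(ζ/2)|00⟩ + sin(ζ/2)e^{iτ}|11⟩, |Ψ2⟩ = sin(ζ/2)|00⟩ − cos(ζ/2)e^{iτ}|11⟩, and ρ = ν1|Ψ1⟩⟨Ψ1| + ν2|Ψ2⟩⟨Ψ2|. Then for all angles (θ_a, φ_a) and (θ_b, φ_b): Tr( ρ · (n(θ_a,φ_a)·σ) ⊗ (n(θ_b,φ_b)·σ) ) = cosθ_a cosθ_b + V sinζ sinθ_a sinθ_b cos(φ_a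 + φ_b − τ). -/
/-!
Both `|Ψ1⟩` and `|Ψ2⟩` have the form `a|00⟩ + b|11⟩`, so only four matrix entries of a product
observable `A ⊗ B` contribute to the expectation value (`trace_outer_mul_tm2`). The two diagonal
ones carry the weights `cos²(ζ/2)` and `sin²(ζ/2)`, in one order or the other, and give
`cos θa cos θb` in either state. The two off-diagonal ones carry `± cos(ζ/2) sin(ζ/2) e^{∓iτ}`, while the corresponding entries of
`n·σ` are `sin θ e^{±iφ}`; together they give `± sin ζ sin θa sin θb cos(φa + φb − τ)`, with
opposite signs for the two states. Averaging with the weights `ν1`, `ν2` yields the claim.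
-/

open Matrix Complex
open scoped ComplexOrder

noncomputable section

/-- `|Ψ1⟩ = cos(ζ/2)|00⟩ + sin(ζ/2)e^{iτ}|11⟩`. -/
def schmidtPsi1 (ζ τ : ℝ) : Fin 2 × Fin 2 → ℂ := fun p =>
  (Real.cos (ζ / 2) : ℂ) * tp2 (e2 0) (e2 0) p +
    (Real.sin (ζ / 2) : ℂ) * Complex.exp (τ * Complex.I) * tp2 (e2 1) (e2 1) p

/-- `|Ψ2⟩ = sin(ζ/2)|00⟩ − cos(ζ/2)e^{iτ}|11⟩`. -/
def schmidtPsi2 (ζ τ : ℝ) : Fin 2 × Fin 2 → ℂ := fun p =>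
  (Real.sin (ζ / 2) : ℂ) * tp2 (e2 0) (e2 0) p -
    (Real.cos (ζ / 2) : ℂ) * Complex.exp (τ * Complex.I) * tp2 (e2 1) (e2 1) p

/-- `ρ = ν1|Ψ1⟩⟨Ψ1| + ν2|Ψ2⟩⟨Ψ2|`. -/
def schmidtRho (ζ τ ν1 ν2 : ℝ) : Matrix (Fin 2 × Fin 2) (Fin 2 × Fin 2) ℂ :=
  (ν1 : ℂ) • outer (schmidtPsi1 ζ τ) + (ν2 : ℂ) • outer (schmidtPsi2 ζ τ)

/-- The two-qubit correlation function `Q = Tr(ρ·(n(θa,φa)·σ)⊗(n(θb,φb)·σ))`. -/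
def corr2 (ζ τ ν1 ν2 θa φa θb φb : ℝ) : ℂ :=
  (schmidtRho ζ τ ν1 ν2 * tm2 (nsigma θa φa) (nsigma θb φb)).trace

/-- Expectation value of `A ⊗ B` in the (unnormalized) Schmidt vector `a|00⟩ + b|11⟩`. -/
lemma trace_outer_mul_tm2 (a b : ℂ) (A B : Matrix (Fin 2) (Fin 2) ℂ) :
    (outer (fun p => a * tp2 (e2 0) (e2 0) p + b * tp2 (e2 1) (e2 1) p) * tm2 A B).trace =
      a * star a * (A 0 0 * B 0 0) + a * star b * (A 1 0 * B 1 0) +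
        b * star a * (A 0 1 * B 0 1) + b * star b * (A 1 1 * B 1 1) := by
  simp [Matrix.trace, Matrix.mul_apply, Fintype.sum_prod_type, outer, tm2, tp2, e2,
    Matrix.vecMulVec_apply]
  ring

/-- Expectation value of a product of spin observables in the Schmidt vector
`p|00⟩ + q e^{iτ}|11⟩` with real amplitudes `p`, `q`. -/
lemma trace_outer_mul_nsigma (p q τ θa φa θb φb : ℝ) :
    (outer (fun i => (p : ℂ) * tp2 (e2 0) (e2 0) i +
        (q : ℂ) * Complex.exp (τ * Complex.I) * tp2 (e2 1) (e2 1) i) *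
        tm2 (nsigma θa φa) (nsigma θb φb)).trace =
      (((p ^ 2 + q ^ 2) * (Real.cos θa * Real.cos θb) +
        2 * p * q * (Real.sin θa * Real.sin θb * Real.cos (φa + φb - τ)) : ℝ) : ℂ) := by
  rw [trace_outer_mul_tm2, Complex.exp_mul_I, ← Complex.ofReal_cos, ← Complex.ofReal_sin,
    Real.cos_sub, Real.cos_add, Real.sin_add]
  have hτ : (Real.cos τ) ^ 2 + (Real.sin τ) ^ 2 = 1 := Real.cos_sq_add_sin_sq τ
  -- Opaque reals keep the remaining identity polynomial in real and imaginary parts.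
  generalize Real.cos τ = cτ at *
  generalize Real.sin τ = sτ at *
  generalize hca : Real.cos θa = ca
  generalize hsa : Real.sin θa = sa
  generalize hcb : Real.cos θb = cb
  generalize hsb : Real.sin θb = sb
  generalize hcfa : Real.cos φa = cfa
  generalize hsfa : Real.sin φa = sfa
  generalize hcfb : Real.cos φb = cfb
  generalize hsfb : Real.sin φb = sfb
  apply Complex.ext
  · simp [nsigma, sigmaX, sigmaY, sigmaZ, hca, hsa, hcb, hsb, hcfa, hsfa, hcfb, hsfb,
      pow_two, -Complex.ofReal_cos, -Complex.ofReal_sin]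
    linear_combination (q ^ 2 * ca * cb) * hτ
  · simp [nsigma, sigmaX, sigmaY, sigmaZ, hca, hsa, hcb, hsb, hcfa, hsfa, hcfb, hsfb,
      pow_two, -Complex.ofReal_cos, -Complex.ofReal_sin]
    ring

/-- The two-qubit correlation function of
`ρ = ν1|Ψ1⟩⟨Ψ1| + ν2|Ψ2⟩⟨Ψ2|` is
`Q = cosθa cosθb + V sinζ sinθa sinθb cos(φa + φb − τ)` with `V = ν1 − ν2`. -/
theorem two_qubit_correlation (ζ τ ν1 ν2 : ℝ) (hν1 : 0 ≤ ν1) (hν2 : 0 ≤ ν2)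
    (hsum : ν1 + ν2 = 1) (V : ℝ) (hV : V = ν1 - ν2) :
    ∀ θa φa θb φb : ℝ,
      corr2 ζ τ ν1 ν2 θa φa θb φb =
        ((Real.cos θa * Real.cos θb +
          V * Real.sin ζ * Real.sin θa * Real.sin θb *
            Real.cos (φa + φb - τ) : ℝ) : ℂ) := by
  intro θa φa θb φb
  -- `|Ψ2⟩` is `|Ψ1⟩` with the amplitudes `(cos, sin)` replaced by `(sin, -cos)`.
  have h2 : schmidtPsi2 ζ τ = fun i => ((Real.sin (ζ / 2) : ℝ) : ℂ) * tp2 (e2 0) (e2 0) i +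
      ((-Real.cos (ζ / 2) : ℝ) : ℂ) * Complex.exp (τ * Complex.I) * tp2 (e2 1) (e2 1) i := by
    funext i
    simp only [schmidtPsi2]
    push_cast
    ring
  have h1 : schmidtPsi1 ζ τ = fun i => ((Real.cos (ζ / 2) : ℝ) : ℂ) * tp2 (e2 0) (e2 0) i +
      ((Real.sin (ζ / 2) : ℝ) : ℂ) * Complex.exp (τ * Complex.I) * tp2 (e2 1) (e2 1) i := rfl
  have hζ : Real.sin ζ = 2 * Real.sin (ζ / 2) * Real.cos (ζ / 2) := by
    rw [← Real.sin_two_mul]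
    ring_nf
  have hn : Real.cos (ζ / 2) ^ 2 + Real.sin (ζ / 2) ^ 2 = 1 := Real.cos_sq_add_sin_sq _
  rw [corr2, schmidtRho, Matrix.add_mul, Matrix.trace_add, Matrix.smul_mul, Matrix.smul_mul,
    Matrix.trace_smul, Matrix.trace_smul, h1, h2, trace_outer_mul_nsigma,
    trace_outer_mul_nsigma, smul_eq_mul, smul_eq_mul, ← Complex.ofReal_mul,
    ← Complex.ofReal_mul, ← Complex.ofReal_add, Complex.ofReal_inj, hζ, hV]
  linear_combination ((ν1 + ν2) * Real.cos θa * Real.cos θb) * hn +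
    (Real.cos θa * Real.cos θb) * hsum
end
end

section
/- Let ζ, τ ∈ ℝ, ν1, ν2 ≥ 0 with ν1+ν2 = 1, V = ν1−ν2, ρ = ν1|Ψ1⟩⟨Ψ1| + ν2|Ψ2⟩⟨Ψ2| with |Ψ1⟩ = cos(ζ/2)|00⟩ + sin(ζ/2)e^{iτ}|11⟩ and |Ψ2⟩ = sin(ζ/2)|00⟩ − cos(ζ/2)e^{iτ}|11⟩. Define Q(n,m) = Tr(ρ·(n·σ)⊗(m·σ)) and the CHSH expression I(a1,a2,b1,b2) = (1/2)(Q(a1,b1)+Q(a1,b2)+Q(a2,b1)−Q(a2,b2)). With the settings a1 = n(0,0), a2 = n(π/2, τ), b1 = n(θ_B, 0), b2 = n(−θ_B, 0), one has I = cosθ_B + V sinζ sinθ_B for every θ_B ∈ ℝ; hence there exists θ_B with I = √(1 + V² sin²ζ), and in particular if V sinζ ≠ 0 there exist settings for which I > 1. -/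
/-! For general settings the correlation function is
`Q = cos θa cos θb + (ν1 - ν2) sin ζ sin θa sin θb cos (φa + φb - τ)` (`corr2_eq`): the populations
of `|00⟩` and `|11⟩` add up to one, and the only coherence of the state is
`(ν1 - ν2) (sin ζ / 2) e^{-iτ}` between these two vectors. The four settings at hand then give
`I = cos θB + V sin ζ sin θB`. This is the real part of `(1 - i V sin ζ) e^{iθB}`, so it reaches the
modulus `√(1 + V² sin² ζ)` when `θB` is the argument of `1 + i V sin ζ`, namely
`arctan (V sin ζ)`. -/

open Matrix Complex
open scoped ComplexOrder

noncomputable section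

/-- The CHSH expression `I = (1/2)(Q(a1,b1)+Q(a1,b2)+Q(a2,b1)−Q(a2,b2))` for the state
`ρ = ν1|Ψ1⟩⟨Ψ1| + ν2|Ψ2⟩⟨Ψ2|` with settings `a1 = n(0,0)`, `a2 = n(π/2,τ)`,
`b1 = n(θB,0)`, `b2 = n(−θB,0)`. -/
def chsh (ζ τ ν1 ν2 θB : ℝ) : ℂ :=
  (1 / 2 : ℂ) *
    (corr2 ζ τ ν1 ν2 0 0 θB 0 + corr2 ζ τ ν1 ν2 0 0 (-θB) 0 +
      corr2 ζ τ ν1 ν2 (Real.pi / 2) τ θB 0 - corr2 ζ τ ν1 ν2 (Real.pi / 2) τ (-θB) 0)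

/-- The correlation function in closed form, for arbitrary measurement directions. -/
lemma corr2_eq (ζ τ ν1 ν2 θa φa θb φb : ℝ) (hsum : ν1 + ν2 = 1) :
    corr2 ζ τ ν1 ν2 θa φa θb φb =
      ((Real.cos θa * Real.cos θb +
        (ν1 - ν2) * Real.sin ζ * Real.sin θa * Real.sin θb * Real.cos (φa + φb - τ) : ℝ) : ℂ) := by
  obtain rfl : ν2 = 1 - ν1 := by linarith
  have hζ : Real.sin ζ = 2 * Real.sin (ζ / 2) * Real.cos (ζ / 2) := by
    rw [← Real.sin_two_mul]; ring_nf
  have hcs : Real.sin (ζ / 2) ^ 2 = 1 - Real.cos (ζ / 2) ^ 2 := Real.sin_sq _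
  have ht : Real.sin τ ^ 2 = 1 - Real.cos τ ^ 2 := Real.sin_sq _
  rw [hζ, Real.cos_sub, Real.cos_add, Real.sin_add]
  simp only [corr2, schmidtRho, outer, tm2, nsigma, sigmaX, sigmaY, sigmaZ, Matrix.trace,
    Matrix.diag, Matrix.mul_apply, Fintype.sum_prod_type, Fin.sum_univ_two, Matrix.add_apply,
    Matrix.smul_apply, Matrix.vecMulVec_apply, Pi.star_apply, schmidtPsi1, schmidtPsi2, tp2, e2,
    Complex.exp_mul_I, ← Complex.ofReal_cos, ← Complex.ofReal_sin]
  simp [-Complex.ofReal_cos, -Complex.ofReal_sin]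
  -- What remains is polynomial in these sines and cosines, modulo the two
  -- Pythagorean identities for `ζ / 2` and for `τ`.
  generalize Real.sin (ζ / 2) = s at *
  generalize Real.cos (ζ / 2) = c at *
  generalize Real.sin τ = st at *
  generalize Real.cos τ = ct at *
  apply Complex.ext
  · simp [-Complex.ofReal_cos, -Complex.ofReal_sin]
    grind
  · simp [-Complex.ofReal_cos, -Complex.ofReal_sin]
    grind

lemma chsh_eq (ζ τ ν1 ν2 θB : ℝ) (hsum : ν1 + ν2 = 1) :
    chsh ζ τ ν1 ν2 θB =
      ((Real.cos θB + (ν1 - ν2) * Real.sin ζ * Real.sin θB : ℝ) : ℂ) := by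
  simp only [chsh, corr2_eq _ _ _ _ _ _ _ _ hsum, Real.cos_zero, Real.sin_zero, Real.cos_neg,
    Real.sin_neg, Real.cos_pi_div_two, Real.sin_pi_div_two, add_zero, sub_self]
  push_cast
  ring

/-- The optimal angle: `(1, x)` is the vector of length `√(1 + x²)` in direction `arctan x`. -/
lemma cos_add_mul_sin_arctan (x : ℝ) :
    Real.cos (Real.arctan x) + x * Real.sin (Real.arctan x) = √(1 + x ^ 2) := by
  have hpos : 0 < √(1 + x ^ 2) := Real.sqrt_pos.mpr (by positivity)
  have hsq : √(1 + x ^ 2) ^ 2 = 1 + x ^ 2 := Real.sq_sqrt (by positivity)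
  rw [Real.cos_arctan, Real.sin_arctan]
  field_simp
  linarith

/-- With settings `a1 = n(0,0)`, `a2 = n(π/2,τ)`, `b1 = n(θB,0)`,
`b2 = n(−θB,0)`, the CHSH expression equals `cosθB + V sinζ sinθB` for every `θB`; hence
some `θB` gives `I = √(1 + V² sin²ζ)`, and if `V sinζ ≠ 0` some settings give `I > 1`. -/
theorem chsh_violation (ζ τ ν1 ν2 : ℝ) (hν1 : 0 ≤ ν1) (hν2 : 0 ≤ ν2)
    (hsum : ν1 + ν2 = 1) (V : ℝ) (hV : V = ν1 - ν2) :
    (∀ θB : ℝ, chsh ζ τ ν1 ν2 θB =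
        ((Real.cos θB + V * Real.sin ζ * Real.sin θB : ℝ) : ℂ)) ∧
      (∃ θB : ℝ, chsh ζ τ ν1 ν2 θB =
        ((Real.sqrt (1 + V ^ 2 * Real.sin ζ ^ 2) : ℝ) : ℂ)) ∧
      (V * Real.sin ζ ≠ 0 → ∃ θB : ℝ, 1 < (chsh ζ τ ν1 ν2 θB).re) := by
  subst hV
  have hmax : chsh ζ τ ν1 ν2 (Real.arctan ((ν1 - ν2) * Real.sin ζ)) =
      ((√(1 + (ν1 - ν2) ^ 2 * Real.sin ζ ^ 2) : ℝ) : ℂ) := by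
    rw [chsh_eq _ _ _ _ _ hsum, cos_add_mul_sin_arctan, mul_pow]
  refine ⟨fun θB => chsh_eq ζ τ ν1 ν2 θB hsum, ⟨_, hmax⟩,
    fun hne => ⟨Real.arctan ((ν1 - ν2) * Real.sin ζ), ?_⟩⟩
  rw [hmax, Complex.ofReal_re, Real.lt_sqrt zero_le_one, ← mul_pow]
  linarith [sq_pos_of_ne_zero hne]
end
end

section
/- Let ζ, τ ∈ ℝ, ν1, ν2 ≥ 0 with ν1+ν2 = 1, V = ν1−ν2, and ρ = ν1|Ψ1⟩⟨Ψ1| + ν2|Ψ2⟩⟨Ψ2| with |Ψ1⟩ = cos(ζ/2)|00⟩ + sin(ζ/2)e^{iτ}|11⟩ and |Ψ2⟩ = sin(ζ/2)|00⟩ − cos(ζ/2)e^{iτ}|11⟩. Then ρ is separable if and only if V sinζ = 0. Here ρ is called separable if there exist finitely many weights p_k ≥ 0 with Σ_k p_k = 1 and 2×2 positive semidefinite Hermitian matrices α_k, β_k of trace one such that ρ = Σ_k p_k (α_k ⊗ β_k). -/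
/-!
In the standard basis `ρ` has only four entries that can be nonzero: the populations of `|00⟩` and
`|11⟩`, and the coherences `⟨00|ρ|11⟩ = (V sin ζ / 2) e^{-iτ}` and its conjugate.

If `V sin ζ = 0`, then `ρ` is diagonal, hence a mixture of `|0⟩⟨0| ⊗ |0⟩⟨0|` and
`|1⟩⟨1| ⊗ |1⟩⟨1|`.

Conversely, let `ρ = ∑ pₖ αₖ ⊗ βₖ`. The population `⟨01|ρ|01⟩ = ∑ pₖ (αₖ)₀₀ (βₖ)₁₁` vanishes and
its summands are nonnegative, so each of them is zero. A positive semidefinite `2×2` matrix with a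
vanishing diagonal entry has vanishing off-diagonal entries (`offDiag_eq_zero`), so each summand
`pₖ (αₖ)₀₁ (βₖ)₀₁` of `⟨00|ρ|11⟩` is zero as well (`IsSeparableTwoQubit.coherence_eq_zero`).
-/


open Matrix Complex
open scoped ComplexOrder

noncomputable section

/-- A two-qubit state is separable if it is a finite convex mixture of Kronecker products
of single-qubit states (positive semidefinite Hermitian `2×2` matrices of trace one). -/
def IsSeparableTwoQubit (ρ : Matrix (Fin 2 × Fin 2) (Fin 2 × Fin 2) ℂ) : Prop :=
  ∃ (n : ℕ) (p : Fin n → ℝ) (A B : Fin n → Matrix (Fin 2) (Fin 2) ℂ),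
    (∀ k, 0 ≤ p k) ∧ (∑ k, p k = 1) ∧
    (∀ k, (A k).PosSemidef ∧ (A k).IsHermitian ∧ (A k).trace = 1) ∧
    (∀ k, (B k).PosSemidef ∧ (B k).IsHermitian ∧ (B k).trace = 1) ∧
    ρ = ∑ k, (p k : ℂ) • tm2 (A k) (B k)

/-- The determinant of `M` is `-|M₀₁|²` when a diagonal entry vanishes, and it is nonnegative. -/
lemma offDiag_eq_zero {M : Matrix (Fin 2) (Fin 2) ℂ} (hM : M.PosSemidef)
    (h : M 0 0 * M 1 1 = 0) : M 0 1 = 0 := by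
  have hdet := hM.det_nonneg
  have h10 : M 1 0 = (starRingEnd ℂ) (M 0 1) := (hM.isHermitian.apply 1 0).symm
  rw [Matrix.det_fin_two, h, h10, Complex.mul_conj, zero_sub, ← Complex.ofReal_neg,
    Complex.zero_le_real] at hdet
  exact Complex.normSq_eq_zero.mp (le_antisymm (by linarith) (Complex.normSq_nonneg _))

lemma IsSeparableTwoQubit.coherence_eq_zero {ρ : Matrix (Fin 2 × Fin 2) (Fin 2 × Fin 2) ℂ}
    (hρ : IsSeparableTwoQubit ρ) (h : ρ (0, 1) (0, 1) = 0) : ρ (0, 0) (1, 1) = 0 := by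
  obtain ⟨n, p, A, B, hp, -, hA, hB, rfl⟩ := hρ
  simp only [Matrix.sum_apply, Matrix.smul_apply, tm2, Matrix.of_apply, smul_eq_mul] at h ⊢
  have hterm : ∀ k ∈ Finset.univ, (0 : ℂ) ≤ (p k : ℂ) * (A k 0 0 * B k 1 1) := fun k _ =>
    mul_nonneg (Complex.zero_le_real.mpr (hp k))
      (mul_nonneg (hA k).1.diag_nonneg (hB k).1.diag_nonneg)
  rw [Finset.sum_eq_zero_iff_of_nonneg hterm] at h
  refine Finset.sum_eq_zero fun k hk => ?_
  rcases mul_eq_zero.mp (h k hk) with h0 | h0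
  · rw [h0, zero_mul]
  rcases mul_eq_zero.mp h0 with h0 | h0
  · rw [offDiag_eq_zero (hA k).1 (by rw [h0, zero_mul]), zero_mul, mul_zero]
  · rw [offDiag_eq_zero (hB k).1 (by rw [h0, mul_zero]), mul_zero, mul_zero]

lemma sin_eq_two_mul_half (ζ : ℝ) : Real.sin ζ = 2 * Real.sin (ζ / 2) * Real.cos (ζ / 2) := by
  rw [← Real.sin_two_mul, mul_div_cancel₀ ζ two_ne_zero]

lemma schmidtRho_coherence (ζ τ ν1 ν2 : ℝ) : schmidtRho ζ τ ν1 ν2 (0, 0) (1, 1) =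
    (((ν1 - ν2) * Real.sin ζ / 2 : ℝ) : ℂ) * (starRingEnd ℂ) (Complex.exp (τ * Complex.I)) := by
  rw [sin_eq_two_mul_half]
  simp [schmidtRho, outer, schmidtPsi1, schmidtPsi2, tp2, e2, Matrix.vecMulVec_apply,
    -Complex.ofReal_cos, -Complex.ofReal_sin, ← Complex.exp_conj]
  ring

/-- The pure state `|j⟩⟨j|` satisfies the requirements on the factors of a separable state. -/
lemma outer_e2_isState (j : Fin 2) :
    (outer (e2 j)).PosSemidef ∧ (outer (e2 j)).IsHermitian ∧ (outer (e2 j)).trace = 1 := by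
  have h : (outer (e2 j)).PosSemidef := Matrix.posSemidef_vecMulVec_self_star _
  refine ⟨h, h.isHermitian, ?_⟩
  fin_cases j <;> simp [outer, e2, Matrix.trace, Matrix.vecMulVec_apply]

/-- Without coherence, `ρ` is the mixture of `|00⟩` and `|11⟩` weighted by its populations. -/
lemma schmidtRho_eq_mixture (ζ τ ν1 ν2 : ℝ) (h : (ν1 - ν2) * Real.sin ζ = 0) :
    schmidtRho ζ τ ν1 ν2 =
      ((ν1 * Real.cos (ζ / 2) ^ 2 + ν2 * Real.sin (ζ / 2) ^ 2 : ℝ) : ℂ) •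
          tm2 (outer (e2 0)) (outer (e2 0)) +
        ((ν1 * Real.sin (ζ / 2) ^ 2 + ν2 * Real.cos (ζ / 2) ^ 2 : ℝ) : ℂ) •
          tm2 (outer (e2 1)) (outer (e2 1)) := by
  have hcs : ((ν1 : ℂ) - ν2) * ((Real.sin (ζ / 2) : ℂ) * (Real.cos (ζ / 2) : ℂ)) = 0 := by
    rw [sin_eq_two_mul_half] at h
    exact_mod_cast (by linarith :
      (ν1 - ν2) * (Real.sin (ζ / 2) * Real.cos (ζ / 2)) = 0)
  have hphase : Complex.exp (τ * Complex.I) * (starRingEnd ℂ) (Complex.exp (τ * Complex.I)) = 1 := by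
    rw [Complex.mul_conj, Complex.normSq_eq_norm_sq, Complex.norm_exp_ofReal_mul_I]
    simp
  ext ⟨i, j⟩ ⟨k, l⟩
  simp only [schmidtRho, outer, schmidtPsi1, schmidtPsi2, tp2, tm2, Matrix.vecMulVec_apply,
    Matrix.add_apply, Matrix.smul_apply, Matrix.of_apply, smul_eq_mul, Pi.star_apply,
    RCLike.star_def, map_add, map_sub, map_mul, Complex.conj_ofReal, Complex.ofReal_add,
    Complex.ofReal_mul, Complex.ofReal_pow]
  generalize Complex.exp (τ * Complex.I) = w at hphase ⊢
  generalize (Real.sin (ζ / 2) : ℂ) = s at hcs ⊢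
  generalize (Real.cos (ζ / 2) : ℂ) = c at hcs ⊢
  fin_cases i <;> fin_cases j <;> fin_cases k <;> fin_cases l <;> simp [e2]
  · ring
  · linear_combination (starRingEnd ℂ) w * hcs
  · linear_combination w * hcs
  · linear_combination ((ν1 : ℂ) * s ^ 2 + ν2 * c ^ 2) * hphase

/-- `ρ = ν1|Ψ1⟩⟨Ψ1| + ν2|Ψ2⟩⟨Ψ2|` is separable iff `V sinζ = 0`,
where `V = ν1 − ν2`. -/
theorem separable_iff (ζ τ ν1 ν2 : ℝ) (hν1 : 0 ≤ ν1) (hν2 : 0 ≤ ν2)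
    (hsum : ν1 + ν2 = 1) (V : ℝ) (hV : V = ν1 - ν2) :
    IsSeparableTwoQubit (schmidtRho ζ τ ν1 ν2) ↔ V * Real.sin ζ = 0 := by
  subst hV
  constructor
  · intro hsep
    have h := hsep.coherence_eq_zero (by
      simp [schmidtRho, outer, schmidtPsi1, schmidtPsi2, tp2, e2, Matrix.vecMulVec_apply])
    rw [schmidtRho_coherence, mul_eq_zero, map_eq_zero,
      or_iff_left (Complex.exp_ne_zero _), Complex.ofReal_eq_zero] at h
    linarith
  · intro h
    refine ⟨2, ![ν1 * Real.cos (ζ / 2) ^ 2 + ν2 * Real.sin (ζ / 2) ^ 2,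
      ν1 * Real.sin (ζ / 2) ^ 2 + ν2 * Real.cos (ζ / 2) ^ 2],
      fun k => outer (e2 k), fun k => outer (e2 k), ?_, ?_, outer_e2_isState,
      outer_e2_isState, ?_⟩
    · intro k
      fin_cases k
      · change 0 ≤ ν1 * Real.cos (ζ / 2) ^ 2 + ν2 * Real.sin (ζ / 2) ^ 2
        positivity
      · change 0 ≤ ν1 * Real.sin (ζ / 2) ^ 2 + ν2 * Real.cos (ζ / 2) ^ 2
        positivity
    · rw [Fin.sum_univ_two]
      simp only [Matrix.cons_val_zero, Matrix.cons_val_one]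
      linear_combination (ν1 + ν2) * Real.sin_sq_add_cos_sq (ζ / 2) + hsum
    · rw [Fin.sum_univ_two, schmidtRho_eq_mixture ζ τ ν1 ν2 h]
      rfl
end
end

section
/- Let N ≥ 2, let (Λ, μ) be a probability space, and for each party k ∈ {1,…,N} and setting s ∈ {1,2} let a_k(s,·) : Λ → {0,1} be measurable response functions. Define the local-hidden-variable probabilities p(o_1…o_N | s_1…s_N) = μ{ λ : a_k(s_k, λ) = o_k for all k }. Then the N-qubit Hardy expression satisfies p(0…0 | 1…1) − p(1…1 | 2…2) − Σ_{j=1}^{N} p(0…0 | 1…1 with the j-th setting replaced by 2) ≤ 0. -/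
/-!
The bound holds pointwise in the hidden variable. If every outcome at setting `0` is `0`, then either
every outcome at setting `1` is `1`, or some party `j` answers `0` at setting `1` as well, and then
switching `j` alone leaves all outcomes `0`. So the event on the left is covered by the events on the
right, and monotonicity and finite subadditivity of the measure finish the argument.
-/

open Matrix Complex
open scoped ComplexOrder

noncomputable section

open MeasureTheory

/-- The local-hidden-variable bound of the `N`-qubit Hardy inequality:
in any LHV model (probability space `(Λ,μ)` with response functions `a k s : Λ → {0,1}`;
setting "1" is encoded by `0 : Fin 2` and setting "2" by `1 : Fin 2`),
`p(0…0|1…1) ≤ p(1…1|2…2) + Σ_j p(0…0|1…1 with the j-th setting replaced by 2)`. -/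
theorem hardy_lhv_bound (N : ℕ) (hN : 2 ≤ N) (Λ : Type*) [MeasurableSpace Λ]
    (μ : Measure Λ) [IsProbabilityMeasure μ]
    (a : Fin N → Fin 2 → Λ → Fin 2) (hmeas : ∀ k s, Measurable (a k s)) :
    μ {ω | ∀ k, a k 0 ω = 0} ≤
      μ {ω | ∀ k, a k 1 ω = 1} +
        ∑ j : Fin N, μ {ω | ∀ k, a k (if k = j then 1 else 0) ω = 0} := by
  have hcover : {ω | ∀ k, a k 0 ω = 0} ⊆ {ω | ∀ k, a k 1 ω = 1} ∪
      ⋃ j : Fin N, {ω | ∀ k, a k (if k = j then 1 else 0) ω = 0} := by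
    intro ω hω
    by_cases h : ∀ k, a k 1 ω = 1
    · exact Or.inl h
    · push Not at h
      obtain ⟨j, hj⟩ := h
      refine Or.inr (Set.mem_iUnion.2 ⟨j, fun k => ?_⟩)
      split_ifs with hkj
      · subst hkj
        omega
      · exact hω k
  calc μ {ω | ∀ k, a k 0 ω = 0}
      ≤ μ ({ω | ∀ k, a k 1 ω = 1} ∪
          ⋃ j : Fin N, {ω | ∀ k, a k (if k = j then 1 else 0) ω = 0}) := measure_mono hcover
    _ ≤ μ {ω | ∀ k, a k 1 ω = 1} +
          μ (⋃ j : Fin N, {ω | ∀ k, a k (if k = j then 1 else 0) ω = 0}) := measure_union_le _ _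
    _ ≤ _ := by
      gcongr
      exact measure_iUnion_fintype_le μ _
end
end

section
/- Let ζ, φ ∈ ℝ, ν1, ν2 ≥ 0 with ν1+ν2 = 1, V = ν1−ν2. On ℂ²⊗ℂ²⊗ℂ² set χ1 = |0⟩, χ2 = cosφ|0⟩ + sinφ|1⟩, |Ψ1⟩ = cos(ζ/2)|00⟩⊗χ1 + sin(ζ/2)|11⟩⊗χ2, |Ψ2⟩ = sin(ζ/2)|00⟩⊗χ1 − cos(ζ/2)|11⟩⊗χ2, and ρ = ν1|Ψ1⟩⟨Ψ1| + ν2|Ψ2⟩⟨Ψ2|. With the settings n_{A1} = n_{B1} = n_{C1} = n(0,0), n_{C2} = n(π,0), n_{A2} = n_{B2} = n(θ₀, π/2), define I_Hardy = p(000|n_{A1},n_{B1},n_{C1}) − p(111|n_{A2},n_{B2},n_{C2}) − p(000|n_{A1},n_{B1},n_{C2}) − p(000|n_{A1},n_{B2},n_{C1}) − p(000|n_{A2},n_{B1},n_{C1}). Then for every θ₀ ∈ ℝ, I_Hardy = (V sinζ cosφ / 4)·sin²θ₀ − (cos⁴(θ₀/2)/2)·(1 + cos²φ + V cosζ sin²φ).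 Moreover, if V sinζ cosφ > 0 then there exists θ₀ ∈ (0,π) with tan²(θ₀/2) = (1 + cos²φ + V cosζ sin²φ)/(V sinζ cosφ), and for this θ₀ one has I_Hardy = (cos⁴(θ₀/2)/2)·(1 + cos²φ + V cosζ sin²φ) > 0. -/
/-!
The state `ρ` is supported on `|000⟩`, `|110⟩` and `|111⟩`, and in each term of the Hardy expression
party `C` is projected onto `|0⟩` or `|1⟩`, so every probability is a short polynomial in the
entries of the projectors (`prob3_eq`). With `r₀ = (1 + V cos ζ)/2` and `r₁ = (1 - V cos ζ)/2`, the
weights of `|00⟩χ1` and `|11⟩χ2` in `ρ`, and `c = cos (θ₀/2)`, `s = sin (θ₀/2)`, the five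
probabilities are
`r₀`, `s⁴ r₀ + c⁴ cos²φ r₁ - V sin ζ cos φ sin²θ₀ / 4`, `0`, `c² r₀`, `c² r₀`,
and `1 - 2c² - s⁴ = -c⁴` gives the closed form (`hardy3_eq`).

For positivity write `D = V sin ζ cos φ` and `K = 1 + cos²φ + V cos ζ sin²φ`. Since `|V cos ζ| ≤ 1`,
`K ≥ 2 cos²φ`, which is positive when `D > 0`. At `θ₀ = 2 arctan √(K/D)` the first term
`D sin²θ₀ / 4 = D s² c² = D c⁴ tan²(θ₀/2)` of the closed form is `K c⁴`, so `I_Hardy = K c⁴ / 2`.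
-/

open Matrix Complex
open scoped ComplexOrder

noncomputable section

/-- `χ2 = cosφ|0⟩ + sinφ|1⟩`. -/
def chi2vec (φ : ℝ) : Fin 2 → ℂ := fun i =>
  (Real.cos φ : ℂ) * e2 0 i + (Real.sin φ : ℂ) * e2 1 i

/-- `|Ψ1⟩ = cos(ζ/2)|00⟩⊗χ1 + sin(ζ/2)|11⟩⊗χ2` with `χ1 = |0⟩`. -/
def threePsi1 (ζ φ : ℝ) : Fin 2 × Fin 2 × Fin 2 → ℂ := fun p =>
  (Real.cos (ζ / 2) : ℂ) * tp3 (e2 0) (e2 0) (e2 0) p +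
    (Real.sin (ζ / 2) : ℂ) * tp3 (e2 1) (e2 1) (chi2vec φ) p

/-- `|Ψ2⟩ = sin(ζ/2)|00⟩⊗χ1 − cos(ζ/2)|11⟩⊗χ2` with `χ1 = |0⟩`. -/
def threePsi2 (ζ φ : ℝ) : Fin 2 × Fin 2 × Fin 2 → ℂ := fun p =>
  (Real.sin (ζ / 2) : ℂ) * tp3 (e2 0) (e2 0) (e2 0) p -
    (Real.cos (ζ / 2) : ℂ) * tp3 (e2 1) (e2 1) (chi2vec φ) p

/-- The three-qubit state `ρ = ν1|Ψ1⟩⟨Ψ1| + ν2|Ψ2⟩⟨Ψ2|`. -/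
def threeRho (ζ φ ν1 ν2 : ℝ) : Matrix (Fin 2 × Fin 2 × Fin 2) (Fin 2 × Fin 2 × Fin 2) ℂ :=
  (ν1 : ℂ) • outer (threePsi1 ζ φ) + (ν2 : ℂ) • outer (threePsi2 ζ φ)

/-- Projector onto outcome `o ∈ {0,1}` of the spin observable along `n(θ,φ)`:
`P⁰ = (I + n·σ)/2`, `P¹ = (I − n·σ)/2`. -/
def projn (o : Fin 2) (θ φ : ℝ) : Matrix (Fin 2) (Fin 2) ℂ :=
  if o = 0 then (1 / 2 : ℂ) • (1 + nsigma θ φ) else (1 / 2 : ℂ) • (1 - nsigma θ φ)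

/-- `p(abc|n_A,n_B,n_C) = Tr(ρ · P^a_{n_A} ⊗ P^b_{n_B} ⊗ P^c_{n_C})`. -/
def prob3 (ζ φ ν1 ν2 : ℝ) (a b c : Fin 2) (nA nB nC : ℝ × ℝ) : ℂ :=
  (threeRho ζ φ ν1 ν2 *
    tm3 (projn a nA.1 nA.2) (projn b nB.1 nB.2) (projn c nC.1 nC.2)).trace

/-- The Hardy expression with settings `n_{A1}=n_{B1}=n_{C1}=n(0,0)`, `n_{C2}=n(π,0)`,
`n_{A2}=n_{B2}=n(θ₀,π/2)`. -/
def hardy3 (ζ φ ν1 ν2 θ₀ : ℝ) : ℂ :=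
  prob3 ζ φ ν1 ν2 0 0 0 (0, 0) (0, 0) (0, 0) -
    prob3 ζ φ ν1 ν2 1 1 1 (θ₀, Real.pi / 2) (θ₀, Real.pi / 2) (Real.pi, 0) -
    prob3 ζ φ ν1 ν2 0 0 0 (0, 0) (0, 0) (Real.pi, 0) -
    prob3 ζ φ ν1 ν2 0 0 0 (0, 0) (θ₀, Real.pi / 2) (0, 0) -
    prob3 ζ φ ν1 ν2 0 0 0 (θ₀, Real.pi / 2) (0, 0) (0, 0)

/-- Expectation of `A ⊗ B ⊗ C` in the vector `α|00⟩χ1 + β|11⟩χ2`. Both `|Ψ1⟩` and `|Ψ2⟩` have this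
form, with `(α, β) = (cos (ζ/2), sin (ζ/2))` and `(sin (ζ/2), -cos (ζ/2))`. -/
lemma trace_outer_tm3 (α β φ : ℝ) (A B C : Matrix (Fin 2) (Fin 2) ℂ) :
    (outer (fun p => (α : ℂ) * tp3 (e2 0) (e2 0) (e2 0) p +
      (β : ℂ) * tp3 (e2 1) (e2 1) (chi2vec φ) p) * tm3 A B C).trace =
    (α : ℂ) ^ 2 * (A 0 0 * B 0 0 * C 0 0) +
    (α * β : ℂ) * (A 0 1 * B 0 1 * (Real.cos φ * C 0 0 + Real.sin φ * C 0 1) +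
      A 1 0 * B 1 0 * (Real.cos φ * C 0 0 + Real.sin φ * C 1 0)) +
    (β : ℂ) ^ 2 * (A 1 1 * B 1 1 * (Real.cos φ ^ 2 * C 0 0 +
      Real.cos φ * Real.sin φ * (C 0 1 + C 1 0) + Real.sin φ ^ 2 * C 1 1)) := by
  simp only [Matrix.trace, Matrix.diag, Matrix.mul_apply, outer, tm3, Matrix.of_apply,
    Matrix.vecMulVec_apply, Fintype.sum_prod_type, Fin.sum_univ_two, Pi.star_apply, tp3, e2,
    chi2vec]
  simp [-Complex.ofReal_cos, -Complex.ofReal_sin]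
  ring

/-- The joint probability for `V = ν1 - ν2`, in terms of the entries of the three projectors. -/
lemma prob3_eq (ζ φ ν1 ν2 : ℝ) (hsum : ν1 + ν2 = 1) (a b c : Fin 2) (nA nB nC : ℝ × ℝ)
    (A B C : Matrix (Fin 2) (Fin 2) ℂ) (hA : projn a nA.1 nA.2 = A)
    (hB : projn b nB.1 nB.2 = B) (hC : projn c nC.1 nC.2 = C) :
    prob3 ζ φ ν1 ν2 a b c nA nB nC =
    ((1 + (ν1 - ν2) * Real.cos ζ) / 2 : ℂ) * (A 0 0 * B 0 0 * C 0 0) +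
    ((ν1 - ν2) * Real.sin ζ / 2 : ℂ) *
      (A 0 1 * B 0 1 * (Real.cos φ * C 0 0 + Real.sin φ * C 0 1) +
      A 1 0 * B 1 0 * (Real.cos φ * C 0 0 + Real.sin φ * C 1 0)) +
    ((1 - (ν1 - ν2) * Real.cos ζ) / 2 : ℂ) * (A 1 1 * B 1 1 * (Real.cos φ ^ 2 * C 0 0 +
      Real.cos φ * Real.sin φ * (C 0 1 + C 1 0) + Real.sin φ ^ 2 * C 1 1)) := by
  have h1 : threePsi1 ζ φ = fun p => (Real.cos (ζ / 2) : ℂ) * tp3 (e2 0) (e2 0) (e2 0) p +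
      (Real.sin (ζ / 2) : ℂ) * tp3 (e2 1) (e2 1) (chi2vec φ) p := rfl
  have h2 : threePsi2 ζ φ = fun p => (Real.sin (ζ / 2) : ℂ) * tp3 (e2 0) (e2 0) (e2 0) p +
      ((-Real.cos (ζ / 2) : ℝ) : ℂ) * tp3 (e2 1) (e2 1) (chi2vec φ) p := by
    funext p
    simp only [threePsi2, Complex.ofReal_neg]
    ring
  have hcos : Real.cos ζ = 2 * Real.cos (ζ / 2) ^ 2 - 1 := by
    rw [← Real.cos_two_mul]; ring_nf
  have hsin : Real.sin ζ = 2 * Real.sin (ζ / 2) * Real.cos (ζ / 2) := by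
    rw [← Real.sin_two_mul]; ring_nf
  have hpy : ((Real.sin (ζ / 2) : ℝ) : ℂ) ^ 2 = 1 - ((Real.cos (ζ / 2) : ℝ) : ℂ) ^ 2 := by
    exact_mod_cast Real.sin_sq (ζ / 2)
  have hν : (ν2 : ℂ) = 1 - ν1 := by
    have h : (ν1 : ℂ) + ν2 = 1 := by exact_mod_cast hsum
    linear_combination h
  rw [prob3, hA, hB, hC, threeRho, Matrix.add_mul, Matrix.trace_add, Matrix.smul_mul,
    Matrix.smul_mul, Matrix.trace_smul, Matrix.trace_smul, h1, h2, trace_outer_tm3,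
    trace_outer_tm3, hcos, hsin, hν]
  simp only [smul_eq_mul, Complex.ofReal_neg, Complex.ofReal_mul, Complex.ofReal_sub,
    Complex.ofReal_pow, Complex.ofReal_ofNat, Complex.ofReal_one, neg_sq, hpy]
  ring

lemma projn_zero_north : projn 0 0 0 = !![1, 0; 0, 0] := by
  ext i j
  fin_cases i <;> fin_cases j <;> simp [projn, nsigma, sigmaX, sigmaY, sigmaZ]
  norm_num

lemma projn_zero_south : projn 0 Real.pi 0 = !![0, 0; 0, 1] := by
  ext i j
  fin_cases i <;> fin_cases j <;> simp [projn, nsigma, sigmaX, sigmaY, sigmaZ]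
  norm_num

lemma projn_one_south : projn 1 Real.pi 0 = !![1, 0; 0, 0] := by
  ext i j
  fin_cases i <;> fin_cases j <;> simp [projn, nsigma, sigmaX, sigmaY, sigmaZ]
  norm_num

lemma projn_zero_yz (θ : ℝ) : projn 0 θ (Real.pi / 2) =
    !![(1 + (Real.cos θ : ℂ)) / 2, -(Complex.I * Real.sin θ / 2);
      Complex.I * Real.sin θ / 2, (1 - (Real.cos θ : ℂ)) / 2] := by
  ext i j
  fin_cases i <;> fin_cases j <;>
    simp [projn, nsigma, sigmaX, sigmaY, sigmaZ, -Complex.ofReal_cos, -Complex.ofReal_sin] <;> ring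

lemma projn_one_yz (θ : ℝ) : projn 1 θ (Real.pi / 2) =
    !![(1 - (Real.cos θ : ℂ)) / 2, Complex.I * Real.sin θ / 2;
      -(Complex.I * Real.sin θ / 2), (1 + (Real.cos θ : ℂ)) / 2] := by
  ext i j
  fin_cases i <;> fin_cases j <;>
    simp [projn, nsigma, sigmaX, sigmaY, sigmaZ, -Complex.ofReal_cos, -Complex.ofReal_sin] <;> ring

lemma hardy3_eq (ζ φ ν1 ν2 : ℝ) (hsum : ν1 + ν2 = 1) (θ₀ : ℝ) : hardy3 ζ φ ν1 ν2 θ₀ =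
    (((ν1 - ν2) * Real.sin ζ * Real.cos φ / 4 * Real.sin θ₀ ^ 2 -
      Real.cos (θ₀ / 2) ^ 4 / 2 *
        (1 + Real.cos φ ^ 2 + (ν1 - ν2) * Real.cos ζ * Real.sin φ ^ 2) : ℝ) : ℂ) := by
  have hc : Real.cos (θ₀ / 2) ^ 4 = ((1 + Real.cos θ₀) / 2) ^ 2 := by
    have h := Real.cos_sq (θ₀ / 2)
    rw [show 2 * (θ₀ / 2) = θ₀ by ring] at h
    calc Real.cos (θ₀ / 2) ^ 4 = (Real.cos (θ₀ / 2) ^ 2) ^ 2 := by ring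
      _ = _ := by rw [h]; ring
  rw [hardy3,
    prob3_eq ζ φ ν1 ν2 hsum 0 0 0 (0, 0) (0, 0) (0, 0) _ _ _
      projn_zero_north projn_zero_north projn_zero_north,
    prob3_eq ζ φ ν1 ν2 hsum 1 1 1 (θ₀, Real.pi / 2) (θ₀, Real.pi / 2) (Real.pi, 0) _ _ _
      (projn_one_yz θ₀) (projn_one_yz θ₀) projn_one_south,
    prob3_eq ζ φ ν1 ν2 hsum 0 0 0 (0, 0) (0, 0) (Real.pi, 0) _ _ _
      projn_zero_north projn_zero_north projn_zero_south,
    prob3_eq ζ φ ν1 ν2 hsum 0 0 0 (0, 0) (θ₀, Real.pi / 2) (0, 0) _ _ _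
      projn_zero_north (projn_zero_yz θ₀) projn_zero_north,
    prob3_eq ζ φ ν1 ν2 hsum 0 0 0 (θ₀, Real.pi / 2) (0, 0) (0, 0) _ _ _
      (projn_zero_yz θ₀) projn_zero_north projn_zero_north, hc, Real.sin_sq φ]
  simp [-Complex.ofReal_cos, -Complex.ofReal_sin]
  ring_nf
  simp only [Complex.I_sq]
  ring

/-- The angle `θ = 2 arctan √r`. -/
lemma exists_tan_half_sq {r : ℝ} (hr : 0 < r) :
    ∃ θ ∈ Set.Ioo 0 Real.pi, Real.tan (θ / 2) ^ 2 = r := by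
  have h0 : 0 < Real.arctan √r := Real.arctan_pos.2 (Real.sqrt_pos.2 hr)
  have h1 := Real.arctan_lt_pi_div_two √r
  refine ⟨2 * Real.arctan √r, ⟨by linarith, by linarith⟩, ?_⟩
  rw [mul_div_cancel_left₀ _ two_ne_zero, Real.tan_arctan, Real.sq_sqrt hr.le]

/-- The quantum value of the three-qubit Hardy expression, and its strict
positivity at the optimal angle `θ₀` when `V sinζ cosφ > 0`. -/
theorem three_qubit_hardy_violation (ζ φ ν1 ν2 : ℝ) (hν1 : 0 ≤ ν1) (hν2 : 0 ≤ ν2)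
    (hsum : ν1 + ν2 = 1) (V : ℝ) (hV : V = ν1 - ν2) :
    (∀ θ₀ : ℝ, hardy3 ζ φ ν1 ν2 θ₀ =
        ((V * Real.sin ζ * Real.cos φ / 4 * Real.sin θ₀ ^ 2 -
          Real.cos (θ₀ / 2) ^ 4 / 2 *
            (1 + Real.cos φ ^ 2 + V * Real.cos ζ * Real.sin φ ^ 2) : ℝ) : ℂ)) ∧
      (0 < V * Real.sin ζ * Real.cos φ →
        ∃ θ₀ ∈ Set.Ioo 0 Real.pi,
          Real.tan (θ₀ / 2) ^ 2 =
            (1 + Real.cos φ ^ 2 + V * Real.cos ζ * Real.sin φ ^ 2) /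
              (V * Real.sin ζ * Real.cos φ) ∧
          hardy3 ζ φ ν1 ν2 θ₀ =
            ((Real.cos (θ₀ / 2) ^ 4 / 2 *
              (1 + Real.cos φ ^ 2 + V * Real.cos ζ * Real.sin φ ^ 2) : ℝ) : ℂ) ∧
          0 < Real.cos (θ₀ / 2) ^ 4 / 2 *
              (1 + Real.cos φ ^ 2 + V * Real.cos ζ * Real.sin φ ^ 2)) := by
  subst hV
  refine ⟨hardy3_eq ζ φ ν1 ν2 hsum, fun hD => ?_⟩
  have hφ : 0 < Real.cos φ ^ 2 := by
    have : Real.cos φ ≠ 0 := fun h => by simp [h] at hD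
    positivity
  -- `V cos ζ ≥ -1`, as a convex combination of `cos ζ` and `-cos ζ`.
  have hVc : -1 ≤ (ν1 - ν2) * Real.cos ζ := by
    nlinarith [mul_nonneg hν1 (neg_le_iff_add_nonneg.1 (Real.neg_one_le_cos ζ)),
      mul_nonneg hν2 (sub_nonneg.2 (Real.cos_le_one ζ))]
  have hK : 0 < 1 + Real.cos φ ^ 2 + (ν1 - ν2) * Real.cos ζ * Real.sin φ ^ 2 := by
    nlinarith [mul_le_mul_of_nonneg_right hVc (sq_nonneg (Real.sin φ)),
      Real.sin_sq_add_cos_sq φ]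
  obtain ⟨θ₀, hθ, htan⟩ := exists_tan_half_sq (div_pos hK hD)
  have hcos : 0 < Real.cos (θ₀ / 2) :=
    Real.cos_pos_of_mem_Ioo ⟨by linarith [hθ.1, Real.pi_pos], by linarith [hθ.2]⟩
  refine ⟨θ₀, hθ, htan, ?_, by positivity⟩
  rw [hardy3_eq ζ φ ν1 ν2 hsum]
  congr 1
  have hsin : Real.sin θ₀ ^ 2 = 4 * Real.tan (θ₀ / 2) ^ 2 * Real.cos (θ₀ / 2) ^ 4 := by
    have h := Real.sin_two_mul (θ₀ / 2)
    rw [show 2 * (θ₀ / 2) = θ₀ by ring] at h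
    rw [h, ← Real.tan_mul_cos hcos.ne']
    ring
  have hDt := (eq_div_iff hD.ne').1 htan
  rw [hsin]
  linear_combination Real.cos (θ₀ / 2) ^ 4 * hDt
end
end

section
/- Let ζ ∈ ℝ, ν1, ν2 ≥ 0 with ν1+ν2 = 1, V = ν1−ν2. On ℂ²⊗ℂ²⊗ℂ² set |Ψ1⟩ = cos(ζ/2)|000⟩ + sin(ζ/2)|111⟩, |Ψ2⟩ = sin(ζ/2)|000⟩ − cos(ζ/2)|111⟩, and ρ = ν1|Ψ1⟩⟨Ψ1| + ν2|Ψ2⟩⟨Ψ2|. With settings n_{A1} = n(θ,0), n_{A2} = n(0,0), n_{B1} = n_{C1} = n(π/2,0), n_{B2} = n_{C2} = n(π,0), define Q_{ijk} = Tr(ρ·(n_{Ai}·σ)⊗(n_{Bj}·σ)⊗(n_{Ck}·σ)) and Q_{ij0} = Tr(ρ·(n_{Ai}·σ)⊗(n_{Bj}·σ)⊗I). Then I₃ := (1/4)(Q_{111}+Q_{121}+Q_{211}+Q_{221}+Q_{110}+Q_{120}+Q_{210}−3Q_{220}) = 1 + (cos²(θ/2)/2)·(V sinζ tan(θ/2)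 − 1) for every θ ∈ [0,π). In particular, if V sinζ > 0 and tan(θ/2) > 1/(V sinζ), then I₃ > 1. -/
/-!
In the computational basis `ρ` is supported on `|000⟩` and `|111⟩`, and the settings have `φ = 0`, so
every `Q_{ijk}` is a sum of two population terms and one coherence term
(`trace_rho_mul_tm3`). The populations add up to `ν₁ + ν₂ = 1` and the coherence is `V sin ζ / 2`.
Only three of the eight correlations survive: `Q₁₁₁ = V sin ζ sin θ`, `Q₁₂₀ = -cos θ` and `Q₂₂₀ = -1`,
so `I₃ = (V sin ζ sin θ - cos θ + 3) / 4`, and half-angle formulas give the stated form.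
-/

open Matrix Complex
open scoped ComplexOrder

noncomputable section

/-- `|Ψ1⟩ = cos(ζ/2)|000⟩ + sin(ζ/2)|111⟩`. -/
def ghz3Psi1 (ζ : ℝ) : Fin 2 × Fin 2 × Fin 2 → ℂ := fun p =>
  (Real.cos (ζ / 2) : ℂ) * tp3 (e2 0) (e2 0) (e2 0) p +
    (Real.sin (ζ / 2) : ℂ) * tp3 (e2 1) (e2 1) (e2 1) p

/-- `|Ψ2⟩ = sin(ζ/2)|000⟩ − cos(ζ/2)|111⟩`. -/
def ghz3Psi2 (ζ : ℝ) : Fin 2 × Fin 2 × Fin 2 → ℂ := fun p =>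
  (Real.sin (ζ / 2) : ℂ) * tp3 (e2 0) (e2 0) (e2 0) p -
    (Real.cos (ζ / 2) : ℂ) * tp3 (e2 1) (e2 1) (e2 1) p

/-- `ρ = ν1|Ψ1⟩⟨Ψ1| + ν2|Ψ2⟩⟨Ψ2|`. -/
def ghz3Rho (ζ ν1 ν2 : ℝ) : Matrix (Fin 2 × Fin 2 × Fin 2) (Fin 2 × Fin 2 × Fin 2) ℂ :=
  (ν1 : ℂ) • outer (ghz3Psi1 ζ) + (ν2 : ℂ) • outer (ghz3Psi2 ζ)

/-- Alice's settings: `n_{A1} = n(θ,0)`, `n_{A2} = n(0,0)`. -/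
def setA (θ : ℝ) (i : Fin 2) : Matrix (Fin 2) (Fin 2) ℂ :=
  if i = 0 then nsigma θ 0 else nsigma 0 0

/-- Bob's and Charlie's settings: `n_{B1} = n_{C1} = n(π/2,0)`, `n_{B2} = n_{C2} = n(π,0)`;
index `0` means no measurement (the identity). -/
def setBC (i : Fin 3) : Matrix (Fin 2) (Fin 2) ℂ :=
  if i = 1 then nsigma (Real.pi / 2) 0 else if i = 2 then nsigma Real.pi 0 else 1

/-- `Q_{ijk} = Tr(ρ · n_{Ai}·σ ⊗ n_{Bj}·σ ⊗ n_{Ck}·σ)` (with `k = 0` meaning that the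
identity is put at the third qubit). -/
def Q3 (ζ ν1 ν2 θ : ℝ) (i : Fin 2) (j k : Fin 3) : ℂ :=
  (ghz3Rho ζ ν1 ν2 * tm3 (setA θ i) (setBC j) (setBC k)).trace

/-- The Bell expression
`I₃ = (1/4)(Q_{111}+Q_{121}+Q_{211}+Q_{221}+Q_{110}+Q_{120}+Q_{210}−3Q_{220})`. -/
def bell3 (ζ ν1 ν2 θ : ℝ) : ℂ :=
  (1 / 4 : ℂ) *
    (Q3 ζ ν1 ν2 θ 0 1 1 + Q3 ζ ν1 ν2 θ 0 2 1 + Q3 ζ ν1 ν2 θ 1 1 1 + Q3 ζ ν1 ν2 θ 1 2 1 +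
      Q3 ζ ν1 ν2 θ 0 1 0 + Q3 ζ ν1 ν2 θ 0 2 0 + Q3 ζ ν1 ν2 θ 1 1 0 -
      3 * Q3 ζ ν1 ν2 θ 1 2 0)

theorem nsigma_zero_eq (θ : ℝ) :
    nsigma θ 0 = !![(Real.cos θ : ℂ), (Real.sin θ : ℂ); (Real.sin θ : ℂ), -(Real.cos θ : ℂ)] := by
  ext i j
  fin_cases i <;> fin_cases j <;> simp [nsigma, sigmaX, sigmaY, sigmaZ]

/-- Only the `|000⟩`, `|111⟩` block of `ρ` is nonzero, so its pairing with a product observable has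
two population terms and one coherence term. -/
theorem trace_rho_mul_tm3 (ζ ν1 ν2 : ℝ) (A B C : Matrix (Fin 2) (Fin 2) ℂ) :
    (ghz3Rho ζ ν1 ν2 * tm3 A B C).trace =
      ((ν1 * Real.cos (ζ / 2) ^ 2 + ν2 * Real.sin (ζ / 2) ^ 2 : ℝ) : ℂ) *
          (A 0 0 * B 0 0 * C 0 0) +
        ((ν1 * Real.sin (ζ / 2) ^ 2 + ν2 * Real.cos (ζ / 2) ^ 2 : ℝ) : ℂ) *
          (A 1 1 * B 1 1 * C 1 1) +
        (((ν1 - ν2) * (Real.sin (ζ / 2) * Real.cos (ζ / 2)) : ℝ) : ℂ) *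
          (A 0 1 * B 0 1 * C 0 1 + A 1 0 * B 1 0 * C 1 0) := by
  simp [Matrix.trace, Matrix.mul_apply, Fintype.sum_prod_type, Fin.sum_univ_two, ghz3Rho, outer,
    Matrix.vecMulVec_apply, ghz3Psi1, ghz3Psi2, tp3, e2, tm3, -Complex.ofReal_cos,
    -Complex.ofReal_sin]
  ring

/-- The Bell expression after inserting the settings. -/
theorem bell3_eq (ζ ν1 ν2 θ : ℝ) (hsum : ν1 + ν2 = 1) :
    bell3 ζ ν1 ν2 θ =
      ((((ν1 - ν2) * Real.sin ζ * Real.sin θ - Real.cos θ + 3) / 4 : ℝ) : ℂ) := by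
  have h1 : Real.sin ζ = 2 * Real.sin (ζ / 2) * Real.cos (ζ / 2) := by
    rw [← Real.sin_two_mul]; ring_nf
  have hp : ν1 * Real.cos (ζ / 2) ^ 2 + ν2 * Real.sin (ζ / 2) ^ 2 =
      1 - (ν1 * Real.sin (ζ / 2) ^ 2 + ν2 * Real.cos (ζ / 2) ^ 2) := by
    linear_combination hsum + (ν1 + ν2) * Real.sin_sq_add_cos_sq (ζ / 2)
  rw [h1]
  simp only [bell3, Q3, trace_rho_mul_tm3, hp, setA, setBC, nsigma_zero_eq]
  simp [-Complex.ofReal_cos, -Complex.ofReal_sin]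
  ring

/-- For every `θ ∈ [0,π)`,
`I₃ = 1 + (cos²(θ/2)/2)(V sinζ tan(θ/2) − 1)`; in particular if `V sinζ > 0` and
`tan(θ/2) > 1/(V sinζ)` then `I₃ > 1`. -/
theorem three_qubit_bell_violation (ζ ν1 ν2 : ℝ) (hν1 : 0 ≤ ν1) (hν2 : 0 ≤ ν2)
    (hsum : ν1 + ν2 = 1) (V : ℝ) (hV : V = ν1 - ν2) :
    ∀ θ ∈ Set.Ico 0 Real.pi,
      bell3 ζ ν1 ν2 θ =
          ((1 + Real.cos (θ / 2) ^ 2 / 2 *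
            (V * Real.sin ζ * Real.tan (θ / 2) - 1) : ℝ) : ℂ) ∧
        (0 < V * Real.sin ζ → 1 / (V * Real.sin ζ) < Real.tan (θ / 2) →
          1 < (bell3 ζ ν1 ν2 θ).re) := by
  intro θ hθ
  have hc : 0 < Real.cos (θ / 2) :=
    Real.cos_pos_of_mem_Ioo ⟨by linarith [hθ.1, Real.pi_pos], by linarith [hθ.2]⟩
  have hs : Real.sin θ = 2 * Real.sin (θ / 2) * Real.cos (θ / 2) := by
    rw [← Real.sin_two_mul]; ring_nf
  have hcos : Real.cos θ = 2 * Real.cos (θ / 2) ^ 2 - 1 := by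
    rw [← Real.cos_two_mul]; ring_nf
  have key : bell3 ζ ν1 ν2 θ =
      ((1 + Real.cos (θ / 2) ^ 2 / 2 *
        (V * Real.sin ζ * Real.tan (θ / 2) - 1) : ℝ) : ℂ) := by
    rw [bell3_eq ζ ν1 ν2 θ hsum, hs, hcos, hV, Real.tan_eq_sin_div_cos]
    congr 1
    field_simp
    ring
  refine ⟨key, fun hpos hlt => ?_⟩
  rw [key, Complex.ofReal_re]
  have h2 : 0 < V * Real.sin ζ * Real.tan (θ / 2) - 1 := by
    rw [div_lt_iff₀ hpos] at hlt
    linarith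
  have : 0 < Real.cos (θ / 2) ^ 2 / 2 * (V * Real.sin ζ * Real.tan (θ / 2) - 1) := by
    positivity
  linarith
end
end

section
/- Let N ≥ 2 be even, ζ ∈ ℝ, ν1, ν2 ≥ 0 with ν1+ν2 = 1, V = ν1−ν2. On (ℂ²)^{⊗N} set |Ψ1⟩ = cos(ζ/2)|0⟩^{⊗N} + sin(ζ/2)|1⟩^{⊗N}, |Ψ2⟩ = sin(ζ/2)|0⟩^{⊗N} − cos(ζ/2)|1⟩^{⊗N}, and ρ = ν1|Ψ1⟩⟨Ψ1| + ν2|Ψ2⟩⟨Ψ2|. Then for all angle lists (θ_1,φ_1),…,(θ_N,φ_N): Tr( ρ · (n(θ_1,φ_1)·σ) ⊗ ⋯ ⊗ (n(θ_N,φ_N)·σ) ) = ∏_{k=1}^{N} cosθ_k + V sinζ · (∏_{k=1}^{N} sinθ_k) · cos(φ_1 + ⋯ + φ_N). -/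
/-! The state `ρ` lives on the span of `|0…0⟩` and `|1…1⟩`, so the trace only involves the four
matrix elements of `⊗ₖ n(θₖ,φₖ)·σ` between these two vectors (`trace_outer_mul`). The two diagonal
elements are `∏ cos θₖ` and `∏ (-cos θₖ)`, which agree because `N` is even; the off-diagonal ones
are `∏ sin θₖ · exp(∓i ∑ φₖ)`, whose sum is `2 (∏ sin θₖ) cos (∑ φₖ)`. The diagonal carries total
weight `ν1 + ν2 = 1`, and the off-diagonal weight is
`(ν1 - ν2) cos(ζ/2) sin(ζ/2) = (V / 2) sin ζ`. -/

open Matrix Complex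
open scoped ComplexOrder

noncomputable section

/-- `|Ψ1⟩ = cos(ζ/2)|0⟩^{⊗N} + sin(ζ/2)|1⟩^{⊗N}`. -/
def ghzPsi1 (N : ℕ) (ζ : ℝ) : (Fin N → Fin 2) → ℂ := fun i =>
  (Real.cos (ζ / 2) : ℂ) * vpow (fun _ => e2 0) i +
    (Real.sin (ζ / 2) : ℂ) * vpow (fun _ => e2 1) i

/-- `|Ψ2⟩ = sin(ζ/2)|0⟩^{⊗N} − cos(ζ/2)|1⟩^{⊗N}`. -/
def ghzPsi2 (N : ℕ) (ζ : ℝ) : (Fin N → Fin 2) → ℂ := fun i =>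
  (Real.sin (ζ / 2) : ℂ) * vpow (fun _ => e2 0) i -
    (Real.cos (ζ / 2) : ℂ) * vpow (fun _ => e2 1) i

/-- `ρ = ν1|Ψ1⟩⟨Ψ1| + ν2|Ψ2⟩⟨Ψ2|` on `(ℂ²)^{⊗N}`. -/
def ghzRho (N : ℕ) (ζ ν1 ν2 : ℝ) : Matrix (Fin N → Fin 2) (Fin N → Fin 2) ℂ :=
  (ν1 : ℂ) • outer (ghzPsi1 N ζ) + (ν2 : ℂ) • outer (ghzPsi2 N ζ)

/-- A product vector `|s⟩⊗⋯⊗|s⟩` of basis vectors is a basis vector of the tensor power. -/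
lemma vpow_e2 (N : ℕ) (s : Fin 2) :
    vpow (fun _ : Fin N => e2 s) = Pi.single (fun _ => s) 1 := by
  funext i
  simp only [vpow, e2, Pi.single_apply, funext_iff]
  split_ifs with h
  · exact Finset.prod_eq_one fun k _ => by simp [h k]
  · push Not at h
    obtain ⟨k, hk⟩ := h
    exact Finset.prod_eq_zero (Finset.mem_univ k) (by simp [hk])

/-- Expectation value of `T` in a real superposition of two basis vectors. -/
lemma trace_outer_mul {n : Type*} [Fintype n] [DecidableEq n] (T : Matrix n n ℂ) (p q : n)
    (a b : ℝ) :
    (outer ((a : ℂ) • Pi.single p 1 + (b : ℂ) • Pi.single q 1) * T).trace =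
      a ^ 2 * T p p + a * b * (T p q + T q p) + b ^ 2 * T q q := by
  have hs : star ((a : ℂ) • Pi.single p 1 + (b : ℂ) • Pi.single q 1 : n → ℂ) =
      (a : ℂ) • Pi.single p 1 + (b : ℂ) • Pi.single q 1 := by
    funext i
    simp only [Pi.star_apply, Pi.add_apply, Pi.smul_apply, Pi.single_apply]
    split_ifs <;> simp
  rw [outer, hs, Matrix.vecMulVec_mul, Matrix.trace_vecMulVec]
  simp only [add_vecMul, smul_vecMul, dotProduct_add, add_dotProduct, smul_dotProduct,
    dotProduct_smul, single_one_vecMul, single_one_dotProduct, smul_eq_mul, row_apply]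
  ring

lemma nsigma_zero_zero (θ φ : ℝ) : nsigma θ φ 0 0 = (Real.cos θ : ℂ) := by
  simp [nsigma, sigmaX, sigmaY, sigmaZ]

lemma nsigma_one_one (θ φ : ℝ) : nsigma θ φ 1 1 = -(Real.cos θ : ℂ) := by
  simp [nsigma, sigmaX, sigmaY, sigmaZ]

lemma nsigma_zero_one (θ φ : ℝ) :
    nsigma θ φ 0 1 = (Real.sin θ : ℂ) * Complex.exp (-(φ * Complex.I)) := by
  rw [← neg_mul, Complex.exp_mul_I]
  simp [nsigma, sigmaX, sigmaY, sigmaZ]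
  ring

lemma nsigma_one_zero (θ φ : ℝ) :
    nsigma θ φ 1 0 = (Real.sin θ : ℂ) * Complex.exp (φ * Complex.I) := by
  rw [Complex.exp_mul_I]
  simp [nsigma, sigmaX, sigmaY, sigmaZ]
  ring

/-- For even `N`, the `N`-qubit correlation function of
`ρ = ν1|Ψ1⟩⟨Ψ1| + ν2|Ψ2⟩⟨Ψ2|` is
`Tr(ρ·⊗_k n(θ_k,φ_k)·σ) = Π_k cosθ_k + V sinζ (Π_k sinθ_k) cos(Σ_k φ_k)`. -/
theorem even_N_correlation (N : ℕ) (hN : 2 ≤ N) (hEven : Even N) (ζ ν1 ν2 : ℝ)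
    (hν1 : 0 ≤ ν1) (hν2 : 0 ≤ ν2) (hsum : ν1 + ν2 = 1) (V : ℝ) (hV : V = ν1 - ν2) :
    ∀ θ φ : Fin N → ℝ,
      (ghzRho N ζ ν1 ν2 * tpow (fun k => nsigma (θ k) (φ k))).trace =
        (((∏ k, Real.cos (θ k)) +
          V * Real.sin ζ * (∏ k, Real.sin (θ k)) * Real.cos (∑ k, φ k) : ℝ) : ℂ) := by
  intro θ φ
  set T := tpow (fun k => nsigma (θ k) (φ k)) with hT
  set p : Fin N → Fin 2 := fun _ => 0 with hp
  set q : Fin N → Fin 2 := fun _ => 1 with hq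
  have h00 : T p p = ∏ k, (Real.cos (θ k) : ℂ) := by
    simp only [hT, hp, tpow, Matrix.of_apply, nsigma_zero_zero]
  have h11 : T q q = ∏ k, (Real.cos (θ k) : ℂ) := by
    simp only [hT, hq, tpow, Matrix.of_apply, nsigma_one_one, Finset.prod_neg, Finset.card_univ,
      Fintype.card_fin, hEven.neg_one_pow, one_mul]
  have hoff : T p q + T q p = 2 * (∏ k, (Real.sin (θ k) : ℂ)) * (Real.cos (∑ k, φ k) : ℂ) := by
    simp only [hT, hp, hq, tpow, Matrix.of_apply, nsigma_zero_one, nsigma_one_zero,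
      Finset.prod_mul_distrib, ← Complex.exp_sum, Finset.sum_neg_distrib, ← Finset.sum_mul]
    rw [Complex.ofReal_cos, Complex.cos, Complex.ofReal_sum, neg_mul]
    ring
  have h1 : ghzPsi1 N ζ = ((Real.cos (ζ / 2) : ℝ) : ℂ) • Pi.single p 1 +
      ((Real.sin (ζ / 2) : ℝ) : ℂ) • Pi.single q 1 := by
    rw [hp, hq, ← vpow_e2, ← vpow_e2]
    rfl
  have h2 : ghzPsi2 N ζ = ((Real.sin (ζ / 2) : ℝ) : ℂ) • Pi.single p 1 +
      ((-Real.cos (ζ / 2) : ℝ) : ℂ) • Pi.single q 1 := by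
    rw [hp, hq, ← vpow_e2, ← vpow_e2]
    funext i
    simp [ghzPsi2, sub_eq_add_neg]
  rw [ghzRho, add_mul, smul_mul_assoc, smul_mul_assoc, trace_add, trace_smul, trace_smul, h1, h2,
    trace_outer_mul, trace_outer_mul, h00, h11, hoff]
  have hζ : Real.sin ζ = 2 * Real.sin (ζ / 2) * Real.cos (ζ / 2) := by
    rw [← Real.sin_two_mul, mul_div_cancel₀ ζ two_ne_zero]
  have hpyth : ((Real.sin (ζ / 2) : ℝ) : ℂ) ^ 2 + ((Real.cos (ζ / 2) : ℝ) : ℂ) ^ 2 = 1 := by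
    exact_mod_cast Real.sin_sq_add_cos_sq (ζ / 2)
  have hs : (ν1 : ℂ) + ν2 = 1 := by exact_mod_cast hsum
  rw [hζ, hV]
  simp only [smul_eq_mul, Complex.ofReal_add, Complex.ofReal_mul, Complex.ofReal_sub,
    Complex.ofReal_neg, Complex.ofReal_prod, Complex.ofReal_ofNat]
  linear_combination (∏ k, (Real.cos (θ k) : ℂ)) * ((ν1 + ν2 : ℂ) * hpyth + hs)
end
end

section
/- Let N ≥ 1 and let X_{k,1}, X_{k,2} ∈ {−1,1} for k = 1,…,N. Then (1/2^{N−1}) · Σ_{(i_1,…,i_N) ∈ {1,2}^N} ∏_{k=1}^{N} X_{k,i_k} − ∏_{k=1}^{N} X_{k,2} ≤ 1. Equivalently, (1/2^{N−1}) ∏_{k=1}^{N}(X_{k,1}+X_{k,2}) − ∏_{k=1}^{N} X_{k,2} ≤ 1. -/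
/-!
Expanding `∏ k, (X k 0 + X k 1)` over all choices of settings gives the correlation sum, so both
bounds are the same. If some party has `X k 0 ≠ X k 1`, its two outcomes cancel, the product
vanishes, and `-∏ k, X k 1 ≤ 1`. Otherwise every factor is `2 * X k 1`, so the rescaled product is
`2 * ∏ k, X k 1` and the expression reduces to `∏ k, X k 1 ≤ 1`.
-/

open Matrix Complex
open scoped ComplexOrder

noncomputable section

/-- The deterministic bound of the `N`-party Bell inequality `I^N ≤ 1`
(setting "1" is encoded by `0 : Fin 2` and setting "2" by `1 : Fin 2`):
`(1/2^{N−1}) Σ_{i∈{1,2}^N} Π_k X_{k,i_k} − Π_k X_{k,2} ≤ 1`, and equivalently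
`(1/2^{N−1}) Π_k (X_{k,1}+X_{k,2}) − Π_k X_{k,2} ≤ 1`. -/
theorem even_bell_deterministic_bound (N : ℕ) (hN : 1 ≤ N) (X : Fin N → Fin 2 → ℝ)
    (hX : ∀ k i, X k i = 1 ∨ X k i = -1) :
    (1 / 2 ^ (N - 1) : ℝ) * (∑ i : Fin N → Fin 2, ∏ k, X k (i k)) - ∏ k, X k 1 ≤ 1 ∧
      (1 / 2 ^ (N - 1) : ℝ) * (∏ k, (X k 0 + X k 1)) - ∏ k, X k 1 ≤ 1 := by
  have h_expand : ∑ i : Fin N → Fin 2, ∏ k, X k (i k) = ∏ k, (X k 0 + X k 1) := by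
    simpa only [Fin.sum_univ_two] using (Fintype.prod_sum X).symm
  rw [h_expand, and_self]
  have h_abs : |∏ k, X k 1| = 1 := by
    rw [Finset.abs_prod]
    refine Finset.prod_eq_one fun k _ => ?_
    rcases hX k 1 with h | h <;> simp [h]
  by_cases h_eq : ∀ k, X k 0 = X k 1
  · have h_prod : ∏ k, (X k 0 + X k 1) = 2 ^ N * ∏ k, X k 1 := by
      simp [h_eq, ← two_mul, Finset.prod_mul_distrib]
    have h_pow : (2 : ℝ) ^ N = 2 ^ (N - 1) * 2 := by
      rw [← pow_succ, Nat.sub_add_cancel hN]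
    have h_scaled : (1 / 2 ^ (N - 1) : ℝ) * (∏ k, (X k 0 + X k 1)) = 2 * ∏ k, X k 1 := by
      rw [h_prod, h_pow]
      field_simp
    rw [h_scaled]
    linarith [le_abs_self (∏ k, X k 1)]
  · push Not at h_eq
    obtain ⟨k, hk⟩ := h_eq
    have h_cancel : X k 0 + X k 1 = 0 := by
      rcases hX k 0 with h | h <;> rcases hX k 1 with h' | h' <;> simp_all
    rw [Finset.prod_eq_zero (Finset.mem_univ k) h_cancel]
    linarith [neg_abs_le (∏ k, X k 1)]
end
end

section
/- Let N ≥ 2 and let X_{k,1}, X_{k,2} ∈ {−1,1} for k = 1,…,N−1, and X_{N,1} ∈ {−1,1}. Then (1/2^{N−1}) · ( Σ_{(i_1,…,i_{N−1}) ∈ {1,2}^{N−1}} ∏_{k=1}^{N−1} X_{k,i_k} ) · (1 + X_{N,1}) − ∏_{k=1}^{N−1} X_{k,2} ≤ 1. -/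
/-!
The sum over all choices of settings factorizes, so with its prefactor it equals
`P = ∏ k, (X k 0 + X k 1) / 2`. If some party has opposite outcomes for its two settings, then
`P = 0` and only `-∏ k, X k 1 ≤ 1` is left. Otherwise `P = ∏ k, X k 1 = q` with `q = ±1`, and the
left-hand side is `q * (1 + XN) - q = q * XN = ±1`.
-/

open Matrix Complex
open scoped ComplexOrder

noncomputable section

/-- The deterministic bound of the odd-`N` Bell inequality `I^N ≤ 1`:
for parties `1,…,N−1` with two settings each ("1" encoded by `0 : Fin 2`, "2" by
`1 : Fin 2`) and party `N` with outcome `XN` at setting 1 (no measurement on the `N`-th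
qubit is accounted by the factor `(1 + XN)`),
`(1/2^{N−1}) (Σ_{i∈{1,2}^{N−1}} Π_k X_{k,i_k}) (1 + XN) − Π_k X_{k,2} ≤ 1`. -/
theorem odd_bell_deterministic_bound (N : ℕ) (hN : 2 ≤ N) (X : Fin (N - 1) → Fin 2 → ℝ)
    (XN : ℝ) (hX : ∀ k i, X k i = 1 ∨ X k i = -1) (hXN : XN = 1 ∨ XN = -1) :
    (1 / 2 ^ (N - 1) : ℝ) * (∑ i : Fin (N - 1) → Fin 2, ∏ k, X k (i k)) * (1 + XN) -
        ∏ k, X k 1 ≤ 1 := by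
  have hfac : (1 / 2 ^ (N - 1) : ℝ) * (∑ i : Fin (N - 1) → Fin 2, ∏ k, X k (i k)) =
      ∏ k, ((X k 0 + X k 1) / 2) := by
    rw [← Fintype.prod_sum fun k j => X k j]
    simp only [Fin.sum_univ_two, Finset.prod_div_distrib, Finset.prod_const, Finset.card_univ,
      Fintype.card_fin]
    ring
  have hq : ∏ k, X k 1 = 1 ∨ ∏ k, X k 1 = -1 :=
    Finset.prod_induction _ (fun x : ℝ => x = 1 ∨ x = -1)
      (by rintro a b (rfl | rfl) (rfl | rfl) <;> norm_num) (Or.inl rfl) fun k _ => hX k 1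
  rw [hfac]
  by_cases h : ∀ k, X k 0 = X k 1
  · have hP : ∏ k, ((X k 0 + X k 1) / 2) = ∏ k, X k 1 :=
      Finset.prod_congr rfl fun k _ => by rw [h k]; ring
    rw [hP]
    rcases hq with hq | hq <;> rcases hXN with hx | hx <;> rw [hq, hx] <;> norm_num
  · push Not at h
    obtain ⟨k, hk⟩ := h
    have hk0 : (X k 0 + X k 1) / 2 = 0 := by
      rcases hX k 0 with h0 | h0 <;> rcases hX k 1 with h1 | h1 <;> rw [h0, h1] at hk ⊢ <;>
        first | exact absurd rfl hk | norm_num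
    rw [Finset.prod_eq_zero (Finset.mem_univ k) hk0]
    rcases hq with hq | hq <;> rw [hq] <;> norm_num
end
end

section
/- Let N ≥ 3, let (Λ, μ) be a probability space, and for each party k ∈ {1,…,N} and setting s ∈ {1,2} let a_k(s,·) : Λ → {0,1} be measurable response functions, with p(o_1…o_N | s_1…s_N) = μ{ λ : a_k(s_k,λ) = o_k for all k }. Then p(0,0,0,…,0 | 1,1,1,…,1) − p(0,0,1,…,1 | 1,1,2,…,2) − Σ_{j=3}^{N} p(0,0,0,…,0 | s^{(j)}) ≤ 0, where s^{(j)} is the setting list that equals 1 for every party except party j, whose setting is 2. -/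
/-!
The bound holds pointwise in the hidden variable, so it follows from monotonicity and
subadditivity of `μ`. Fix `ω` for which every party answers `0` at setting 1. If some party
`j ≥ 3` also answers `0` at setting 2, then `ω` lies in the event of the `j`-th summand.
Otherwise all parties `3,…,N` answer `1` at setting 2, while parties 1 and 2 answer `0` at
setting 1, which is the event of the first term on the right.
-/

open Matrix Complex
open scoped ComplexOrder

noncomputable section

open MeasureTheory

/-- The local-hidden-variable bound of the Bell inequality
`p(0_1 0_2 | 1_1 1_2) ⊗ I^{N−2}_Hardy ≤ 0`: in any LHV model (setting "1" encoded by
`0 : Fin 2`, setting "2" by `1 : Fin 2`; parties are indexed by `Fin N`, so parties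
`3,…,N` have indices `2 ≤ j`),
`p(0,0,0,…,0|1,1,1,…,1) ≤ p(0,0,1,…,1|1,1,2,…,2) + Σ_{j=3}^N p(0,…,0|s⁽ʲ⁾)`,
where `s⁽ʲ⁾` equals 1 for every party except party `j`, whose setting is 2. -/
theorem conditioned_hardy_lhv_bound (N : ℕ) (hN : 3 ≤ N) (Λ : Type*) [MeasurableSpace Λ]
    (μ : Measure Λ) [IsProbabilityMeasure μ]
    (a : Fin N → Fin 2 → Λ → Fin 2) (hmeas : ∀ k s, Measurable (a k s)) :
    μ {ω | ∀ k, a k 0 ω = 0} ≤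
      μ {ω | ∀ k : Fin N, a k (if (k : ℕ) < 2 then 0 else 1) ω =
          (if (k : ℕ) < 2 then 0 else 1)} +
        ∑ j ∈ Finset.univ.filter (fun j : Fin N => 2 ≤ (j : ℕ)),
          μ {ω | ∀ k, a k (if k = j then 1 else 0) ω = 0} := by
  calc
    μ {ω | ∀ k, a k 0 ω = 0} ≤
        μ ({ω | ∀ k : Fin N, a k (if (k : ℕ) < 2 then 0 else 1) ω =
            (if (k : ℕ) < 2 then 0 else 1)} ∪
          ⋃ j ∈ Finset.univ.filter (fun j : Fin N => 2 ≤ (j : ℕ)),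
            {ω | ∀ k, a k (if k = j then 1 else 0) ω = 0}) := by
      refine measure_mono fun ω hω => ?_
      simp only [Set.mem_ofPred_eq] at hω
      by_cases h : ∃ j : Fin N, 2 ≤ (j : ℕ) ∧ a j 1 ω = 0
      · obtain ⟨j, hj, hj0⟩ := h
        refine Or.inr (Set.mem_biUnion (x := j) (by simpa using hj) fun k => ?_)
        split_ifs with hk
        · rw [hk, hj0]
        · exact hω k
      · refine Or.inl fun k => ?_
        split_ifs with hk
        · exact hω k
        · exact Fin.eq_one_of_ne_zero _ fun h0 => h ⟨k, not_lt.mp hk, h0⟩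
    _ ≤ _ := (measure_union_le _ _).trans
        (add_le_add le_rfl (measure_biUnion_finset_le _ _))
end
end

section
/- Let ζ, φ ∈ ℝ, ν1, ν2 ≥ 0 with ν1+ν2 = 1, V = ν1−ν2. On ℂ²⊗ℂ²⊗ℂ² set χ1 = |0⟩, χ2 = cosφ|0⟩ + sinφ|1⟩, |Ψ1⟩ = cos(ζ/2)|00⟩⊗χ1 + sin(ζ/2)|11⟩⊗χ2, |Ψ2⟩ = sin(ζ/2)|00⟩⊗χ1 − cos(ζ/2)|11⟩⊗χ2, and ρ = ν1|Ψ1⟩⟨Ψ1| + ν2|Ψ2⟩⟨Ψ2|. Let P± = (I ± σx)/2 be the projectors onto the ±1 eigenvectors of σx. Then the probability that the first two parties obtain equal outcomes when both measure σx, namely Tr( ρ · (P₊⊗P₊ + P₋⊗P₋) ⊗ I ), equals (1 + V sinζ cosφ)/2; in particular it differs from 1/2 if and only if V sinζ cosφ ≠ 0. -/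
/-!
The two projectors combine to `P₊⊗P₊ + P₋⊗P₋ = (I + σx⊗σx)/2`. For a vector
`a|00⟩⊗χ1 + b|11⟩⊗χ2` with real `a, b` and `χ1, χ2` of norm one, the operator `σx⊗σx` exchanges `|00⟩` and
`|11⟩`, so the expectation of `(I + σx⊗σx)/2 ⊗ I` is `(a² + b² + 2ab⟨χ1|χ2⟩)/2`, where `⟨χ1|χ2⟩ = cos φ`
(`trace_outer_coincidence`). For `Ψ1` and `Ψ2` the product `2ab` is `sin ζ` and `-sin ζ`
respectively, so averaging with weights `ν1, ν2` produces the factor `V = ν1 - ν2`.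
-/

open Matrix Complex
open scoped ComplexOrder

noncomputable section

/-- `P± = (I ± σx)/2`, the projectors onto the `±1` eigenvectors of `σx`. -/
def projXplus : Matrix (Fin 2) (Fin 2) ℂ := (1 / 2 : ℂ) • (1 + sigmaX)
def projXminus : Matrix (Fin 2) (Fin 2) ℂ := (1 / 2 : ℂ) • (1 - sigmaX)

/-- The unnormalised expectation of the coincidence projector in the state
`a|00⟩⊗χ1 + b|11⟩⊗χ2`; the real amplitudes `a, b` cover both `Ψ1` and `Ψ2`. -/
theorem trace_outer_coincidence (a b φ : ℝ) :
    (outer (fun p => (a : ℂ) * tp3 (e2 0) (e2 0) (e2 0) p +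
        (b : ℂ) * tp3 (e2 1) (e2 1) (chi2vec φ) p) *
      (tm3 projXplus projXplus 1 + tm3 projXminus projXminus 1)).trace =
      (((a ^ 2 + b ^ 2 + 2 * a * b * Real.cos φ) / 2 : ℝ) : ℂ) := by
  have h : (Real.sin φ : ℂ) ^ 2 + (Real.cos φ : ℂ) ^ 2 = 1 := by
    exact_mod_cast Real.sin_sq_add_cos_sq φ
  simp only [Matrix.trace, Matrix.diag, Matrix.mul_apply, Fintype.sum_prod_type, Fin.sum_univ_two]
  simp [outer, Matrix.vecMulVec_apply, tp3, tm3, e2, chi2vec, projXplus, projXminus, sigmaX,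
    -Complex.ofReal_cos, -Complex.ofReal_sin]
  linear_combination ((b : ℂ) ^ 2 / 2) * h

/-- The probability that the first two parties obtain equal outcomes
when both measure `σx`, namely `Tr(ρ·(P₊⊗P₊ + P₋⊗P₋)⊗I)`, equals
`(1 + V sinζ cosφ)/2`; in particular it differs from `1/2` iff `V sinζ cosφ ≠ 0`. -/
theorem certificate_authorization_coincidence (ζ φ ν1 ν2 : ℝ) (hν1 : 0 ≤ ν1)
    (hν2 : 0 ≤ ν2) (hsum : ν1 + ν2 = 1) (V : ℝ) (hV : V = ν1 - ν2) :
    (threeRho ζ φ ν1 ν2 *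
        (tm3 projXplus projXplus 1 + tm3 projXminus projXminus 1)).trace =
        (((1 + V * Real.sin ζ * Real.cos φ) / 2 : ℝ) : ℂ) ∧
      ((1 + V * Real.sin ζ * Real.cos φ) / 2 ≠ 1 / 2 ↔
        V * Real.sin ζ * Real.cos φ ≠ 0) := by
  have h1 : threePsi1 ζ φ = fun p => ((Real.cos (ζ / 2) : ℝ) : ℂ) * tp3 (e2 0) (e2 0) (e2 0) p +
      ((Real.sin (ζ / 2) : ℝ) : ℂ) * tp3 (e2 1) (e2 1) (chi2vec φ) p := rfl
  have h2 : threePsi2 ζ φ = fun p => ((Real.sin (ζ / 2) : ℝ) : ℂ) * tp3 (e2 0) (e2 0) (e2 0) p +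
      ((-Real.cos (ζ / 2) : ℝ) : ℂ) * tp3 (e2 1) (e2 1) (chi2vec φ) p := by
    funext p
    simp only [threePsi2, Complex.ofReal_neg]
    ring
  have hsin : Real.sin ζ = 2 * Real.sin (ζ / 2) * Real.cos (ζ / 2) := by
    rw [← Real.sin_two_mul, mul_div_cancel₀ ζ two_ne_zero]
  refine ⟨?_, ?_⟩
  · rw [threeRho, add_mul, Matrix.smul_mul, Matrix.smul_mul, Matrix.trace_add,
      Matrix.trace_smul, Matrix.trace_smul, h1, h2, trace_outer_coincidence,
      trace_outer_coincidence, smul_eq_mul, smul_eq_mul]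
    norm_cast
    rw [hsin, hV]
    linear_combination ((ν1 + ν2) / 2) * Real.sin_sq_add_cos_sq (ζ / 2) + (1 / 2) * hsum
  · rw [not_iff_not]
    constructor <;> intro h <;> linarith
end
end
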